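/- arXiv:math/0108108 — 2 statements merged into one kernel-verified Lean document; each statement's English description precedes it below -/
import Mathlib

section
/- The KdV flows commute: [δₘ, δₙ] = 0 as derivations of 𝒜, for all m, n ≥ 0. -/
/- STATEMENT 2.  The KdV flows δₖ — the unique derivations of 𝒜 commuting with ∂
with δₖ(u₀) = ∂fₖ (hence δₖ(uₙ) = ∂^{n+1}fₖ) — commute: [δₘ,δₙ] = 0. -/

noncomputable section

/-- `K = ℚ((ε))`. -/
abbrev K : Type := LaurentSeries ℚ

/-- the loop expansion parameter `ε ∈ K`. -/
def eps : K := HahnSeries.single 1 1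

/-- `𝒜 = K[u₀,u₁,u₂,…]`, the algebra of differential polynomials (`uₙ = ∂ⁿu`). -/
abbrev A : Type := MvPolynomial ℕ K

/-- the derivation `∂` of `𝒜`, with `∂uₙ = uₙ₊₁`. -/
def d : Derivation K A A :=
  MvPolynomial.mkDerivation K (fun n => MvPolynomial.X (n + 1))

/-- the generalized binomial coefficient `C(i,j) = i(i−1)⋯(i−j+1)/j!` for `i : ℤ`. -/
def gch (i : ℤ) (j : ℕ) : ℚ :=
  (∏ l ∈ Finset.range j, ((i : ℚ) - l)) / (j.factorial : ℚ)

/-- pseudodifferential operators `Σ_{i ≤ N} aᵢ∂ⁱ`, represented by their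
coefficient functions `ℤ → 𝒜` (elements of `Ψ(𝒜)` are those with support
bounded above). -/
def Psi : Type := ℤ → A

/-- support of a pseudodifferential operator is bounded above. -/
def BddAbv (a : Psi) : Prop := ∃ N : ℤ, ∀ i : ℤ, N < i → a i = 0

/-- the product on `Ψ(𝒜)`, determined by `∂ⁱ·a = Σ_{j≥0} C(i,j)(∂ʲa)∂^{i−j}`:
the coefficient of `∂ⁿ` in `A·B` is `Σ_{i,j} C(i,j)·aᵢ·∂ʲ(b_{n−i+j})` (a finite
sum when the supports are bounded above). -/
def pmul (a b : Psi) : Psi := fun n =>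
  ∑ᶠ (i : ℤ) (j : ℕ), gch i j • (a i * (⇑d)^[j] (b (n - i + j)))

/-- the identity operator. -/
def onePsi : Psi := fun i => if i = 0 then 1 else 0

/-- the Lax operator `L = (1/2)ε²∂² + u₀`. -/
def Lax : Psi := fun i =>
  if i = 2 then MvPolynomial.C ((1/2 : ℚ) • eps ^ 2)
  else if i = 0 then MvPolynomial.X 0 else 0

/-- `∂² + 2ε⁻²u₀ = 2ε⁻²L`. -/
def Dsq : Psi := fun i =>
  if i = 2 then 1 else if i = 0 then MvPolynomial.C (2 * (eps ^ 2)⁻¹) * MvPolynomial.X 0 else 0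

/-- `D` is a square root of `∂² + 2ε⁻²u₀` of the form `∂ + (terms aᵢ∂ⁱ, i ≤ −1)`. -/
def IsD (D : Psi) : Prop :=
  pmul D D = Dsq ∧ D 1 = 1 ∧ D 0 = 0 ∧ ∀ i : ℤ, 2 ≤ i → D i = 0

/-- `Lᵏ`. -/
def Lpow (k : ℕ) : Psi := (pmul Lax)^[k] onePsi

/-- `LᵏD`. -/
def LD (D : Psi) (k : ℕ) : Psi := pmul (Lpow k) D

/-- the `k`-th Gelfand–Dickii polynomial `fₖ = ε²·a₋₁(k)`, where
`LᵏD = Σ aᵢ(k)∂ⁱ`. -/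
def GD (D : Psi) (k : ℕ) : A := MvPolynomial.C (eps ^ 2) * LD D k (-1)

/-- the operator `𝖪g = (1/8)ε²∂³g + u₀·∂g + (1/2)∂(u₀·g)`. -/
def Kop (g : A) : A :=
  MvPolynomial.C ((1/8 : ℚ) • eps ^ 2) * (⇑d)^[3] g + MvPolynomial.X 0 * d g
    + (1/2 : ℚ) • d (MvPolynomial.X 0 * g)

/-- the `k`-th KdV flow: the unique derivation of `𝒜` commuting with `∂` with
`δₖ(u₀) = ∂fₖ`, i.e. `δₖ(uₙ) = ∂^{n+1}fₖ`. -/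
def kdv (D : Psi) (k : ℕ) : Derivation K A A :=
  MvPolynomial.mkDerivation K (fun n => (⇑d)^[n + 1] (GD D k))

section PseudodifferentialOperators

open Finset

section Star

variable {k R : Type*} [CommRing k] [CommRing R] [Algebra k R]

theorem iterate_derivation_mul (d : Derivation k R R) (n : ℕ) (a b : R) :
    d^[n] (a * b) = ∑ x ∈ antidiagonal n, (n.choose x.1 : R) * (d^[x.1] a * d^[x.2] b) := by
  induction n with
  | zero => simp
  | succ n ih =>
    rw [sum_antidiagonal_choose_succ_mul (fun i j => d^[i] a * d^[j] b),
      Function.iterate_succ_apply', ih, map_sum, ← sum_add_distrib]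
    refine sum_congr rfl fun x hx => ?_
    rw [Derivation.leibniz, Derivation.leibniz, Derivation.map_natCast,
      Nat.choose_symm_of_eq_add (HasAntidiagonal.mem_antidiagonal.mp hx).symm]
    simp only [Function.iterate_succ_apply', smul_eq_mul]
    ring

theorem iterate_derivation_sum (d : Derivation k R R) (n : ℕ) {ι : Type*} (s : Finset ι)
    (f : ι → R) : d^[n] (∑ i ∈ s, f i) = ∑ i ∈ s, d^[n] (f i) := by
  induction n with
  | zero => rfl
  | succ n ih => simp only [Function.iterate_succ_apply', ih, map_sum]

theorem iterate_derivation_intCast_mul (d : Derivation k R R) (n : ℕ) (c : ℤ) (a : R) :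
    d^[n] ((c : R) * a) = c * d^[n] a := by
  induction n with
  | zero => rfl
  | succ n ih => simp [Function.iterate_succ_apply', ih]

/-- The product of `∑_p α_p ∂^(N - p)` and `∑_q β_q ∂^(M - q)`, as the sequence of coefficients of
`∂^(N + M - n)`; it does not depend on `M`. -/
def starCoeff (d : Derivation k R R) (N : ℤ) (α β : ℕ → R) (n : ℕ) : R :=
  ∑ x ∈ antidiagonal n, ∑ y ∈ antidiagonal x.2,
    ((Ring.choose (N - x.1) y.1 : ℤ) : R) * (α x.1 * d^[y.1] (β y.2))

theorem starCoeff_assoc (d : Derivation k R R) (N M : ℤ) (α β γ : ℕ → R) (n : ℕ) :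
    starCoeff d (N + M) (starCoeff d N α β) γ n =
      starCoeff d N α (starCoeff d M β γ) n := by
  have vandermonde : ∀ (p j q l : ℕ),
      (Ring.choose (N - p) j : ℤ) * (Ring.choose (N + M - (p + (j + q) : ℕ)) l : ℤ) =
      ∑ x ∈ antidiagonal l,
        ((j + x.1).choose j : ℤ) * Ring.choose (N - p) (j + x.1) * Ring.choose (M - q) x.2 := by
    intro p j q l
    rw [show N + M - (p + (j + q) : ℕ) = (N - p - j) + (M - q) by push_cast; ring,
      Ring.add_choose_eq l (Commute.all _ _), mul_sum]
    refine sum_congr rfl fun x _ => ?_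
    have := Ring.choose_smul_choose (N - p) (Nat.le_add_right j x.1)
    rw [Nat.add_sub_cancel_left, nsmul_eq_mul] at this
    rw [this, mul_assoc]
  have left : starCoeff d (N + M) (starCoeff d N α β) γ n =
      ∑ x ∈ antidiagonal n, ∑ y ∈ antidiagonal x.2, ∑ z ∈ antidiagonal x.1,
        ∑ w ∈ antidiagonal z.2, ∑ v ∈ antidiagonal y.1,
        (((w.1 + v.1).choose w.1 : ℤ) * Ring.choose (N - z.1) (w.1 + v.1) *
          Ring.choose (M - w.2) v.2 : ℤ) *
            (α z.1 * d^[w.1] (β w.2) * d^[v.1 + v.2] (γ y.2)) := by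
    unfold starCoeff
    refine sum_congr rfl fun x _ => sum_congr rfl fun y _ => ?_
    rw [sum_mul, mul_sum]
    refine sum_congr rfl fun z hz => ?_
    rw [sum_mul, mul_sum]
    refine sum_congr rfl fun w hw => ?_
    have hx : x.1 = z.1 + (w.1 + w.2) := by
      rw [HasAntidiagonal.mem_antidiagonal.mp hw, HasAntidiagonal.mem_antidiagonal.mp hz]
    have h := congrArg (Int.cast : ℤ → R) (vandermonde z.1 w.1 w.2 y.1)
    rw [← hx] at h
    calc _ = (((Ring.choose (N - z.1) w.1 : ℤ) * (Ring.choose (N + M - x.1) y.1 : ℤ) : ℤ) : R) *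
          (α z.1 * d^[w.1] (β w.2) * d^[y.1] (γ y.2)) := by push_cast; ring
      _ = _ := by
        rw [h, Int.cast_sum, sum_mul]
        refine sum_congr rfl fun v hv => ?_
        rw [HasAntidiagonal.mem_antidiagonal.mp hv]
  have right : starCoeff d N α (starCoeff d M β γ) n =
      ∑ x ∈ antidiagonal n, ∑ y ∈ antidiagonal x.2, ∑ z ∈ antidiagonal y.2,
        ∑ w ∈ antidiagonal z.2, ∑ v ∈ antidiagonal y.1,
        ((y.1.choose v.1 : ℤ) * Ring.choose (N - x.1) y.1 * Ring.choose (M - z.1) w.1 : ℤ) *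
            (α x.1 * d^[v.1] (β z.1) * d^[v.2 + w.1] (γ w.2)) := by
    unfold starCoeff
    refine sum_congr rfl fun x _ => sum_congr rfl fun y _ => ?_
    rw [iterate_derivation_sum, mul_sum, mul_sum]
    refine sum_congr rfl fun z _ => ?_
    rw [iterate_derivation_sum, mul_sum, mul_sum]
    refine sum_congr rfl fun w _ => ?_
    rw [iterate_derivation_intCast_mul, iterate_derivation_mul, mul_sum, mul_sum, mul_sum]
    refine sum_congr rfl fun v _ => ?_
    rw [Function.iterate_add_apply d v.2]
    push_cast
    ring
  rw [left, right]
  simp only [sum_sigma']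
  refine sum_nbij'
    (fun ⟨_, y, z, w, v⟩ => ⟨(z.1, w.1 + v.1 + w.2 + v.2 + y.2), (w.1 + v.1, w.2 + v.2 + y.2),
      (w.2, v.2 + y.2), (v.2, y.2), (w.1, v.1)⟩)
    (fun ⟨x, _, z, w, v⟩ => ⟨(x.1 + v.1 + z.1, v.2 + w.1 + w.2), (v.2 + w.1, w.2),
      (x.1, v.1 + z.1), (v.1, z.1), (v.2, w.1)⟩) ?_ ?_ ?_ ?_ ?_
  · rintro ⟨⟨x1, x2⟩, ⟨y1, y2⟩, ⟨z1, z2⟩, ⟨w1, w2⟩, ⟨v1, v2⟩⟩ h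
    simp only [and_true, mem_sigma, HasAntidiagonal.mem_antidiagonal] at h ⊢
    omega
  · rintro ⟨⟨x1, x2⟩, ⟨y1, y2⟩, ⟨z1, z2⟩, ⟨w1, w2⟩, ⟨v1, v2⟩⟩ h
    simp only [and_true, true_and, mem_sigma, HasAntidiagonal.mem_antidiagonal] at h ⊢
    omega
  · rintro ⟨⟨x1, x2⟩, ⟨y1, y2⟩, ⟨z1, z2⟩, ⟨w1, w2⟩, ⟨v1, v2⟩⟩ h
    simp only [and_true, true_and, mem_sigma, HasAntidiagonal.mem_antidiagonal, Sigma.mk.injEq,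
      Prod.mk.injEq, heq_eq_eq] at h ⊢
    omega
  · rintro ⟨⟨x1, x2⟩, ⟨y1, y2⟩, ⟨z1, z2⟩, ⟨w1, w2⟩, ⟨v1, v2⟩⟩ h
    simp only [and_true, true_and, mem_sigma, HasAntidiagonal.mem_antidiagonal, Sigma.mk.injEq,
      Prod.mk.injEq, heq_eq_eq] at h ⊢
    omega
  · rintro ⟨⟨x1, x2⟩, ⟨y1, y2⟩, ⟨z1, z2⟩, ⟨w1, w2⟩, ⟨v1, v2⟩⟩ h
    rfl

/-- The composition of two formal pseudodifferential operators `∑ aᵢ∂ⁱ`, `∑ bᵢ∂ⁱ`, in terms of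
coefficient functions. -/
def symbolMul (d : Derivation k R R) (a b : ℤ → R) (n : ℤ) : R :=
  ∑ᶠ (i : ℤ) (j : ℕ), ((Ring.choose i j : ℤ) : R) * (a i * d^[j] (b (n - i + j)))

theorem symbolMul_sub_natCast (d : Derivation k R R) {a b : ℤ → R} {N M : ℤ}
    (ha : ∀ i, N < i → a i = 0) (hb : ∀ i, M < i → b i = 0) (n : ℕ) :
    symbolMul d a b (N + M - n) = starCoeff d N (fun p => a (N - p)) (fun q => b (M - q)) n := by
  have term_zero : ∀ (i : ℤ) (j : ℕ), N < i ∨ i < N - n + j → ((Ring.choose i j : ℤ) : R) *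
        (a i * d^[j] (b (N + M - n - i + j))) = 0 := by
    rintro i j (h | h)
    · simp [ha i h]
    · simp [hb (N + M - n - i + j) (by omega)]
  unfold symbolMul starCoeff
  rw [finsum_eq_finsetSum_of_support_subset (s := (range (n + 1)).image fun p : ℕ => N - p),
    sum_image (by intro x _ y _ h; simpa using h), Nat.sum_antidiagonal_eq_sum_range_succ_mk]
  · refine sum_congr rfl fun p hp => ?_
    have hp := mem_range.mp hp
    rw [finsum_eq_finsetSum_of_support_subset (s := range (n - p + 1)),
      Nat.sum_antidiagonal_eq_sum_range_succ_mk]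
    · refine sum_congr rfl fun j hj => ?_
      have hj := mem_range.mp hj
      simp only
      congr 4
      omega
    · intro j hj
      by_contra hj'
      simp only [coe_range, Set.mem_Iio] at hj'
      exact hj (term_zero _ _ (by omega))
  · intro i hi
    by_contra hi'
    refine hi (finsum_eq_zero_of_forall_eq_zero fun j => term_zero i j ?_)
    by_contra h
    refine hi' ?_
    simp only [coe_image, coe_range, Set.mem_image, Set.mem_Iio]
    exact ⟨(N - i).toNat, by omega, by omega⟩

end Star

/-- Formal pseudodifferential operators `∑ aᵢ∂ⁱ` over a differential algebra `(R, d)`, as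
coefficient functions with support bounded above. -/
structure PsiDO {k R : Type*} [CommRing k] [CommRing R] [Algebra k R] (_d : Derivation k R R) where
  /-- the coefficient of `∂ⁱ` -/
  coeff : ℤ → R
  bddAbove : ∃ N : ℤ, ∀ i, N < i → coeff i = 0

namespace PsiDO

variable {k R : Type*} [CommRing k] [CommRing R] [Algebra k R] {d : Derivation k R R}

instance : CoeFun (PsiDO d) (fun _ => ℤ → R) := ⟨PsiDO.coeff⟩

@[ext] theorem ext {a b : PsiDO d} (h : ∀ i, a i = b i) : a = b := by
  cases a
  cases b
  congr
  exact funext h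

/-- The order of the operator is at most `N`. -/
def OrderLE (a : PsiDO d) (N : ℤ) : Prop := ∀ i, N < i → a i = 0

theorem OrderLE.mono {a : PsiDO d} {N M : ℤ} (h : OrderLE a N) (hNM : N ≤ M) : OrderLE a M :=
  fun i hi => h i (hNM.trans_lt hi)

theorem exists_orderLE (a : PsiDO d) : ∃ N, OrderLE a N := a.bddAbove

theorem exists_orderLE₂ (a b : PsiDO d) : ∃ N, OrderLE a N ∧ OrderLE b N := by
  obtain ⟨N, hN⟩ := a.exists_orderLE
  obtain ⟨M, hM⟩ := b.exists_orderLE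
  exact ⟨max N M, hN.mono (le_max_left _ _), hM.mono (le_max_right _ _)⟩

theorem ext_of_orderLE {a b : PsiDO d} {N : ℤ} (ha : OrderLE a N) (hb : OrderLE b N)
    (h : ∀ n : ℕ, a (N - n) = b (N - n)) : a = b := by
  ext i
  rcases lt_or_ge N i with hi | hi
  · rw [ha i hi, hb i hi]
  · simpa [Int.toNat_of_nonneg (sub_nonneg.mpr hi)] using h (N - i).toNat

instance : Zero (PsiDO d) := ⟨⟨0, 0, fun _ _ => rfl⟩⟩

instance : One (PsiDO d) := ⟨⟨fun i => if i = 0 then 1 else 0, 0, fun _ hi => if_neg hi.ne'⟩⟩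

instance : Add (PsiDO d) := ⟨fun a b => ⟨fun i => a i + b i, by
  obtain ⟨N, ha, hb⟩ := exists_orderLE₂ a b
  exact ⟨N, fun i hi => by simp [ha i hi, hb i hi]⟩⟩⟩

instance : Neg (PsiDO d) := ⟨fun a => ⟨fun i => -a i, by
  obtain ⟨N, ha⟩ := a.exists_orderLE
  exact ⟨N, fun i hi => by simp [ha i hi]⟩⟩⟩

instance : SMul k (PsiDO d) := ⟨fun c a => ⟨fun i => c • a i, by
  obtain ⟨N, ha⟩ := a.exists_orderLE
  exact ⟨N, fun i hi => by simp [ha i hi]⟩⟩⟩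

theorem symbolMul_eq_zero {a b : PsiDO d} {N M : ℤ} (ha : OrderLE a N) (hb : OrderLE b M)
    {i : ℤ} (hi : N + M < i) : symbolMul d a b i = 0 := by
  refine finsum_eq_zero_of_forall_eq_zero fun l => finsum_eq_zero_of_forall_eq_zero fun j => ?_
  rcases lt_or_ge N l with hl | hl
  · simp [ha l hl]
  · simp [hb (i - l + j) (by omega)]

instance : Mul (PsiDO d) := ⟨fun a b => ⟨symbolMul d a b, by
  obtain ⟨N, ha, hb⟩ := exists_orderLE₂ a b
  exact ⟨N + N, fun i hi => symbolMul_eq_zero ha hb hi⟩⟩⟩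

@[simp] theorem zero_apply (i : ℤ) : (0 : PsiDO d) i = 0 := rfl
theorem one_apply (i : ℤ) : (1 : PsiDO d) i = if i = 0 then 1 else 0 := rfl
@[simp] theorem add_apply (a b : PsiDO d) (i : ℤ) : (a + b) i = a i + b i := rfl
@[simp] theorem neg_apply (a : PsiDO d) (i : ℤ) : (-a) i = -a i := rfl
@[simp] theorem smul_apply (c : k) (a : PsiDO d) (i : ℤ) : (c • a) i = c • a i := rfl
theorem mul_apply (a b : PsiDO d) (i : ℤ) : (a * b) i = symbolMul d a b i := rfl

theorem OrderLE.mul {a b : PsiDO d} {N M : ℤ} (ha : OrderLE a N) (hb : OrderLE b M) :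
    OrderLE (a * b) (N + M) :=
  fun _ hi => symbolMul_eq_zero ha hb hi

theorem OrderLE.add {a b : PsiDO d} {N : ℤ} (ha : OrderLE a N) (hb : OrderLE b N) :
    OrderLE (a + b) N :=
  fun i hi => by rw [add_apply, ha i hi, hb i hi, add_zero]

theorem OrderLE.smul {a : PsiDO d} {N : ℤ} (ha : OrderLE a N) (c : k) : OrderLE (c • a) N :=
  fun i hi => by rw [smul_apply, ha i hi, smul_zero]

theorem orderLE_one : OrderLE (1 : PsiDO d) 0 := fun _ hi => if_neg hi.ne'

theorem mul_apply_sub_natCast {a b : PsiDO d} {N M : ℤ} (ha : OrderLE a N) (hb : OrderLE b M)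
    (n : ℕ) : (a * b) (N + M - n) =
      starCoeff d N (fun p => a (N - p)) (fun q => b (M - q)) n :=
  symbolMul_sub_natCast d ha hb n

theorem mul_apply_add {a b : PsiDO d} {N M : ℤ} (ha : OrderLE a N) (hb : OrderLE b M) :
    (a * b) (N + M) = a N * b M := by
  simpa [starCoeff] using mul_apply_sub_natCast ha hb 0

theorem mul_apply_add_sub_one {a b : PsiDO d} {N M : ℤ} (ha : OrderLE a N) (hb : OrderLE b M) :
    (a * b) (N + M - 1) = a N * b (M - 1) + N * (a N * d (b M)) + a (N - 1) * b M := by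
  simpa [starCoeff, Nat.sum_antidiagonal_succ] using mul_apply_sub_natCast ha hb 1

instance : AddCommGroup (PsiDO d) where
  add_assoc a b c := by ext; simp [add_assoc]
  zero_add a := by ext; simp
  add_zero a := by ext; simp
  neg_add_cancel a := by ext; simp
  add_comm a b := by ext; simp [add_comm]
  nsmul := nsmulRec
  zsmul := zsmulRec

instance : Module k (PsiDO d) where
  one_smul a := by ext; simp
  mul_smul x y a := by ext; simp [mul_smul]
  smul_zero x := by ext; simp
  smul_add x a b := by ext; simp
  add_smul x y a := by ext; simp [add_smul]
  zero_smul a := by ext; simp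

@[simp] theorem sub_apply (a b : PsiDO d) (i : ℤ) : (a - b) i = a i - b i := by
  rw [sub_eq_add_neg, add_apply, neg_apply, sub_eq_add_neg]

instance : Ring (PsiDO d) where
  left_distrib a b c := by
    obtain ⟨N, ha⟩ := a.exists_orderLE
    obtain ⟨M, hb, hc⟩ := exists_orderLE₂ b c
    refine ext_of_orderLE (ha.mul (hb.add hc)) ((ha.mul hb).add (ha.mul hc)) fun n => ?_
    rw [add_apply, mul_apply_sub_natCast ha hb, mul_apply_sub_natCast ha hc,
      mul_apply_sub_natCast ha (hb.add hc)]
    simp only [starCoeff, ← sum_add_distrib, add_apply, iterate_map_add, mul_add]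
  right_distrib a b c := by
    obtain ⟨N, ha, hb⟩ := exists_orderLE₂ a b
    obtain ⟨M, hc⟩ := c.exists_orderLE
    refine ext_of_orderLE ((ha.add hb).mul hc) ((ha.mul hc).add (hb.mul hc)) fun n => ?_
    rw [add_apply, mul_apply_sub_natCast ha hc, mul_apply_sub_natCast hb hc,
      mul_apply_sub_natCast (ha.add hb) hc]
    simp only [starCoeff, ← sum_add_distrib, add_apply, add_mul, mul_add]
  zero_mul a := by
    ext i
    simp [mul_apply, symbolMul]
  mul_zero a := by
    ext i
    simp [mul_apply, symbolMul]
  mul_assoc a b c := by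
    obtain ⟨N, ha⟩ := a.exists_orderLE
    obtain ⟨M, hb⟩ := b.exists_orderLE
    obtain ⟨P, hc⟩ := c.exists_orderLE
    refine ext_of_orderLE ((ha.mul hb).mul hc)
      (by simpa only [add_assoc] using ha.mul (hb.mul hc)) fun n => ?_
    rw [mul_apply_sub_natCast (ha.mul hb) hc, add_assoc, mul_apply_sub_natCast ha (hb.mul hc)]
    simp only [mul_apply_sub_natCast ha hb, mul_apply_sub_natCast hb hc]
    exact starCoeff_assoc d N M _ _ _ n
  one_mul a := by
    obtain ⟨N, ha⟩ := a.exists_orderLE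
    refine ext_of_orderLE (by simpa using orderLE_one.mul ha) ha fun n => ?_
    have h := mul_apply_sub_natCast orderLE_one ha n
    rw [zero_add] at h
    rw [h, starCoeff, sum_eq_single (0, n), sum_eq_single (0, n)]
    · simp [one_apply]
    · rintro ⟨j, q⟩ hj hne
      have : j ≠ 0 := by
        rintro rfl
        simp_all
      simp [Ring.choose_zero_pos ℤ (Nat.pos_of_ne_zero this)]
    · simp
    · rintro ⟨p, m⟩ hp hne
      have : p ≠ 0 := by
        rintro rfl
        simp_all
      simp [one_apply, this]
    · simp
  mul_one a := by
    obtain ⟨N, ha⟩ := a.exists_orderLE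
    refine ext_of_orderLE (by simpa using ha.mul orderLE_one) ha fun n => ?_
    have h := mul_apply_sub_natCast ha orderLE_one n
    rw [add_zero] at h
    have hd : ∀ j, j ≠ 0 → d^[j] (1 : R) = 0 := by
      intro j hj
      obtain ⟨j, rfl⟩ := Nat.exists_eq_succ_of_ne_zero hj
      simp [Function.iterate_succ_apply]
    rw [h, starCoeff, sum_eq_single (n, 0), sum_eq_single (0, 0)]
    · simp [one_apply]
    · rintro ⟨j, q⟩ hj hne
      simp_all
    · simp
    · rintro ⟨p, m⟩ hp hne
      refine sum_eq_zero ?_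
      rintro ⟨j, q⟩ hq
      by_cases hq0 : q = 0
      · have : j ≠ 0 := by
          simp only [HasAntidiagonal.mem_antidiagonal, ne_eq, Prod.mk.injEq] at hp hq hne
          omega
        simp [one_apply, hq0, hd j this]
      · simp [one_apply, hq0]
    · simp
  neg_add_cancel := neg_add_cancel
  zsmul := zsmulRec

instance : IsScalarTower k (PsiDO d) (PsiDO d) where
  smul_assoc c a b := by
    obtain ⟨N, ha, hb⟩ := exists_orderLE₂ a b
    refine ext_of_orderLE ((ha.smul c).mul hb) ((ha.mul hb).smul c) fun n => ?_
    rw [smul_eq_mul, smul_eq_mul, smul_apply, mul_apply_sub_natCast ha hb,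
      mul_apply_sub_natCast (ha.smul c) hb]
    simp only [starCoeff, smul_sum, smul_apply, smul_mul_assoc, mul_smul_comm]

instance : SMulCommClass k (PsiDO d) (PsiDO d) where
  smul_comm c a b := by
    obtain ⟨N, ha, hb⟩ := exists_orderLE₂ a b
    refine ext_of_orderLE ((ha.mul hb).smul c) (ha.mul (hb.smul c)) fun n => ?_
    rw [smul_eq_mul, smul_eq_mul, smul_apply, mul_apply_sub_natCast ha hb,
      mul_apply_sub_natCast ha (hb.smul c)]
    have hd : ∀ (j : ℕ) (x : R), d^[j] (c • x) = c • d^[j] x := fun j x => by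
      induction j with
      | zero => rfl
      | succ j ih => simp only [Function.iterate_succ_apply', ih, Derivation.map_smul]
    simp only [starCoeff, smul_sum, smul_apply, hd, mul_smul_comm]

/-- The coefficientwise extension to operators of a derivation of the coefficients. -/
def mapCoeff (δ : Derivation k R R) : PsiDO d →ₗ[k] PsiDO d where
  toFun a := ⟨fun i => δ (a i), by
    obtain ⟨N, ha⟩ := a.exists_orderLE
    exact ⟨N, fun i hi => by simp [ha i hi]⟩⟩
  map_add' a b := by ext i; exact map_add δ (a i) (b i)
  map_smul' c a := by ext i; exact δ.map_smul c (a i)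

@[simp] theorem mapCoeff_apply (δ : Derivation k R R) (a : PsiDO d) (i : ℤ) :
    mapCoeff δ a i = δ (a i) := rfl

theorem OrderLE.mapCoeff {a : PsiDO d} {N : ℤ} (ha : OrderLE a N) (δ : Derivation k R R) :
    OrderLE (mapCoeff δ a) N :=
  fun i hi => by rw [mapCoeff_apply, ha i hi, map_zero]

theorem mapCoeff_mul {δ : Derivation k R R} (hδ : ∀ x, δ (d x) = d (δ x)) (a b : PsiDO d) :
    mapCoeff δ (a * b) = mapCoeff δ a * b + a * mapCoeff δ b := by
  obtain ⟨N, ha, hb⟩ := exists_orderLE₂ a b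
  refine ext_of_orderLE ((ha.mul hb).mapCoeff δ)
    (((ha.mapCoeff δ).mul hb).add (ha.mul (hb.mapCoeff δ))) fun n => ?_
  have hδd : ∀ (j : ℕ) (x : R), δ (d^[j] x) = d^[j] (δ x) :=
    fun j x => (Function.Semiconj.iterate_right (f := δ) hδ j) x
  rw [add_apply, mapCoeff_apply, mul_apply_sub_natCast ha hb,
    mul_apply_sub_natCast (ha.mapCoeff δ) hb, mul_apply_sub_natCast ha (hb.mapCoeff δ)]
  simp only [starCoeff, map_sum, ← sum_add_distrib]
  refine sum_congr rfl fun x _ => sum_congr rfl fun y _ => ?_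
  simp only [Derivation.leibniz, Derivation.map_intCast, smul_eq_mul, hδd, mapCoeff_apply]
  ring

/-- The differential part `∑_{i ≥ 0} aᵢ∂ⁱ` of an operator. -/
def diffPart (a : PsiDO d) : PsiDO d := ⟨fun i => if 0 ≤ i then a i else 0, by
  obtain ⟨N, ha⟩ := a.exists_orderLE
  exact ⟨N, fun i hi => by simp [ha i hi]⟩⟩

theorem diffPart_apply (a : PsiDO d) (i : ℤ) : diffPart a i = if 0 ≤ i then a i else 0 := rfl

theorem diffPart_apply_of_neg (a : PsiDO d) {i : ℤ} (hi : i < 0) : diffPart a i = 0 :=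
  if_neg hi.not_ge

theorem orderLE_sub_diffPart (a : PsiDO d) : OrderLE (a - diffPart a) (-1) := fun i hi => by
  rw [sub_apply, diffPart_apply, if_pos (by omega), sub_self]

theorem mul_apply_of_neg {a b : PsiDO d} (ha : ∀ i < 0, a i = 0) (hb : ∀ i < 0, b i = 0) {n : ℤ}
    (hn : n < 0) : (a * b) n = 0 := by
  refine finsum_eq_zero_of_forall_eq_zero fun i => finsum_eq_zero_of_forall_eq_zero fun j => ?_
  rcases lt_or_ge i 0 with hi | hi
  · simp [ha i hi]
  · lift i to ℕ using hi
    rcases lt_or_ge i j with hj | hj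
    · rw [Ring.choose_natCast, Nat.choose_eq_zero_of_lt hj]
      simp
    · simp [hb (n - i + j) (by omega)]

section Lax

variable {k R : Type*} [Field k] [CommRing R] [Algebra k R] {d : Derivation k R R}

/-- `L = c∂² + u` with `c ≠ 0`, and `D = ∂ + ⋯` is a square root of `c⁻¹L`. -/
structure IsLaxRoot (L D : PsiDO d) (c : k) : Prop where
  ne_zero : c ≠ 0
  orderLE_root : OrderLE D 1
  root_one : D 1 = 1
  eq_smul_sq : L = c • (D * D)
  orderLE : OrderLE L 2
  apply_two : L 2 = algebraMap k R c
  apply_one : L 1 = 0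
  apply_of_neg : ∀ i < 0, L i = 0

/-- `δ` is a derivation commuting with `d` which acts on the potential of `L` through the residue
of `M`. -/
structure IsLaxFlow (L M : PsiDO d) (c : k) (δ : Derivation k R R) : Prop where
  comm : ∀ x, δ (d x) = d (δ x)
  apply_zero : δ (L 0) = 2 * algebraMap k R c * d (M (-1))

variable {L D M : PsiDO d} {c : k} {δ δ' : Derivation k R R}

theorem IsLaxRoot.commute (h : IsLaxRoot L D c) : Commute L D := by
  rw [h.eq_smul_sq]
  exact ((Commute.refl D).mul_left (Commute.refl D)).smul_left c

theorem IsLaxFlow.mapCoeff_eq (hL : IsLaxRoot L D c) (hδ : IsLaxFlow L M c δ)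
    (hM : Commute L M) : mapCoeff δ L = diffPart M * L - L * diffPart M := by
  set N := M - diffPart M with hN_def
  have hN : OrderLE N (-1) := orderLE_sub_diffPart M
  have hLN : diffPart M * L - L * diffPart M = L * N - N * L := by
    rw [hN_def, mul_sub, sub_mul, hM.eq]
    abel
  have h1 := mul_apply_add hL.orderLE hN
  have h1' := mul_apply_add hN hL.orderLE
  have h0 := mul_apply_add_sub_one hL.orderLE hN
  have h0' := mul_apply_add_sub_one hN hL.orderLE
  norm_num at h1 h1' h0 h0'
  ext i
  rw [mapCoeff_apply]
  rcases lt_or_ge i 0 with hi | hi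
  · rw [hL.apply_of_neg i hi, map_zero, sub_apply,
      mul_apply_of_neg (fun j hj => diffPart_apply_of_neg M hj) hL.apply_of_neg hi,
      mul_apply_of_neg hL.apply_of_neg (fun j hj => diffPart_apply_of_neg M hj) hi, sub_zero]
  rw [hLN, sub_apply]
  obtain rfl | rfl | hi : i = 0 ∨ i = 1 ∨ 2 ≤ i := by omega
  · have hN1 : N (-1) = M (-1) := by
      rw [hN_def, sub_apply, diffPart_apply_of_neg M (by norm_num), sub_zero]
    rw [hδ.apply_zero, h0, h0', hL.apply_one, hL.apply_two, Derivation.map_algebraMap, hN1]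
    ring
  · rw [h1, h1', hL.apply_one, map_zero]
    ring
  · rw [hL.orderLE.mul hN i (by omega), hN.mul hL.orderLE i (by omega), sub_zero]
    rcases hi.eq_or_lt with rfl | hi
    · rw [hL.apply_two, Derivation.map_algebraMap]
    · rw [hL.orderLE i hi, map_zero]

variable [CharZero k]

theorem IsLaxRoot.eq_zero_of_anticomm (hL : IsLaxRoot L D c) {X : PsiDO d}
    (hX : X * D + D * X = 0) : X = 0 := by
  obtain ⟨N, hN⟩ := X.exists_orderLE
  have step : ∀ n : ℕ, OrderLE X (N - n) := by
    intro n
    induction n with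
    | zero => simpa using hN
    | succ n ih =>
      intro i hi
      rcases (show N - n ≤ i by push_cast at hi; omega).eq_or_lt with rfl | hi
      · have h := congrArg (fun Y : PsiDO d => Y (N - n + 1)) hX
        simp only [add_apply, zero_apply] at h
        rw [mul_apply_add ih hL.orderLE_root, add_comm (N - (n : ℤ)) 1,
          mul_apply_add hL.orderLE_root ih, hL.root_one, mul_one, one_mul, ← two_smul k] at h
        exact (smul_eq_zero_iff_right two_ne_zero).mp h
      · exact ih i hi
  ext i
  exact step (N - i + 1).toNat i (by omega)

theorem IsLaxFlow.mapCoeff_root (hL : IsLaxRoot L D c) (hδ : IsLaxFlow L M c δ)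
    (hM : Commute L M) : mapCoeff δ D = diffPart M * D - D * diffPart M := by
  refine sub_eq_zero.mp (hL.eq_zero_of_anticomm ?_)
  have h := hδ.mapCoeff_eq hL hM
  rw [hL.eq_smul_sq, map_smul, mapCoeff_mul hδ.comm, mul_smul_comm, smul_mul_assoc, ← smul_sub] at h
  have h := smul_right_injective (PsiDO d) hL.ne_zero h
  rw [← sub_eq_zero] at h
  rw [← h]
  noncomm_ring

theorem IsLaxFlow.mapCoeff_pow_mul (hL : IsLaxRoot L D c) (hδ : IsLaxFlow L M c δ)
    (hM : Commute L M) (n : ℕ) :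
    mapCoeff δ (L ^ n * D) = diffPart M * (L ^ n * D) - L ^ n * D * diffPart M := by
  induction n with
  | zero => simpa using hδ.mapCoeff_root hL hM
  | succ n ih =>
    rw [pow_succ', mul_assoc, mapCoeff_mul hδ.comm, ih, hδ.mapCoeff_eq hL hM]
    noncomm_ring

theorem residue_flow_symm (hL : IsLaxRoot L D c) {m n : ℕ}
    (hδ : IsLaxFlow L (L ^ m * D) c δ) (hδ' : IsLaxFlow L (L ^ n * D) c δ') :
    δ ((L ^ n * D) (-1)) = δ' ((L ^ m * D) (-1)) := by
  have hcomm (p : ℕ) : Commute L (L ^ p * D) := ((Commute.refl L).pow_right p).mul_right hL.commute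
  have h := hδ.mapCoeff_pow_mul hL (hcomm m) n
  have h' := hδ'.mapCoeff_pow_mul hL (hcomm n) m
  have hMM : Commute (L ^ m * D) (L ^ n * D) :=
    ((hcomm n).pow_left m).mul_left ((hL.commute.symm.pow_right n).mul_right (Commute.refl D))
  rw [← mapCoeff_apply (d := d), ← mapCoeff_apply (d := d), h, h']
  generalize L ^ m * D = M at *
  generalize L ^ n * D = M' at *
  have key : diffPart M * M' - M' * diffPart M - (diffPart M' * M - M * diffPart M') =
      diffPart M * diffPart M' - diffPart M' * diffPart M
        - ((M - diffPart M) * (M' - diffPart M') - (M' - diffPart M') * (M - diffPart M)) := by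
    have := hMM.eq
    simp only [mul_sub, sub_mul, this]
    abel
  have hP := fun i hi => diffPart_apply_of_neg M (i := i) hi
  have hP' := fun i hi => diffPart_apply_of_neg M' (i := i) hi
  have hN := orderLE_sub_diffPart M
  have hN' := orderLE_sub_diffPart M'
  rw [← sub_eq_zero, ← sub_apply, key, sub_apply, sub_apply, sub_apply,
    mul_apply_of_neg hP hP' (by norm_num), mul_apply_of_neg hP' hP (by norm_num),
    hN.mul hN' (-1) (by norm_num), hN'.mul hN (-1) (by norm_num)]
  simp

end Lax

end PsiDO

end PseudodifferentialOperators

section KdV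

theorem MvPolynomial.derivation_comm_of_X {σ k : Type*} [CommRing k]
    {δ δ' : Derivation k (MvPolynomial σ k) (MvPolynomial σ k)}
    (h : ∀ i, δ (δ' (X i)) = δ' (δ (X i)))
    (x : MvPolynomial σ k) : δ (δ' x) = δ' (δ x) := by
  have h : ⁅δ, δ'⁆ = 0 := derivation_ext fun i => by
    rw [Derivation.commutator_apply, h i, sub_self, Derivation.zero_apply]
  rw [← sub_eq_zero, ← Derivation.commutator_apply, h, Derivation.zero_apply]

theorem gch_eq_choose (i : ℤ) (j : ℕ) : gch i j = ((Ring.choose i j : ℤ) : ℚ) := by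
  have h := Ring.descPochhammer_eq_factorial_smul_choose i j
  rw [← Polynomial.eval_eq_smeval, descPochhammer_eval_eq_prod_range, nsmul_eq_mul] at h
  rw [gch, div_eq_iff (by positivity), mul_comm]
  exact_mod_cast h

theorem intCast_rat_smul_eq_mul (z : ℤ) (x : A) : (z : ℚ) • x = (z : A) * x := by
  exact (Algebra.smul_def _ _).trans (congrArg (· * x) (map_intCast _ z))

theorem pmul_eq_symbolMul (a b : Psi) : pmul a b = symbolMul d a b := by
  funext n
  refine finsum_congr fun i => finsum_congr fun j => ?_
  rw [gch_eq_choose]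
  exact intCast_rat_smul_eq_mul _ _

/-- The Lax operator as an element of the ring of pseudodifferential operators. -/
def laxOp : PsiDO d := ⟨Lax, 2, fun i hi => by
  rw [Lax, if_neg (by omega), if_neg (by omega)]⟩

/-- A square root of the Lax operator as an element of the ring of pseudodifferential operators. -/
def IsD.toPsiDO {D : Psi} (hD : IsD D) : PsiDO d := ⟨D, 1, fun i hi => hD.2.2.2 i hi⟩

theorem Lpow_eq_coeff (k : ℕ) : Lpow k = (laxOp ^ k : PsiDO d).coeff := by
  induction k with
  | zero => rfl
  | succ k ih =>
    rw [Lpow, Function.iterate_succ_apply', ← Lpow, ih, pow_succ']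
    exact pmul_eq_symbolMul _ _

theorem LD_eq_coeff {D : Psi} (hD : IsD D) (k : ℕ) :
    LD D k = (laxOp ^ k * hD.toPsiDO).coeff := by
  rw [LD, Lpow_eq_coeff]
  exact pmul_eq_symbolMul _ _

theorem eps_ne_zero : eps ≠ 0 := HahnSeries.single_ne_zero one_ne_zero

theorem two_mul_half_smul (x : K) : 2 * ((1 / 2 : ℚ) • x) = x := by
  rw [two_mul, ← add_smul, add_halves, one_smul]

theorem isLaxRoot_toPsiDO {D : Psi} (hD : IsD D) :
    PsiDO.IsLaxRoot laxOp hD.toPsiDO ((1 / 2 : ℚ) • eps ^ 2) where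
  ne_zero := smul_ne_zero (by norm_num) (pow_ne_zero 2 eps_ne_zero)
  orderLE_root := fun i hi => hD.2.2.2 i hi
  root_one := hD.2.1
  eq_smul_sq := by
    ext1 i
    have h : (hD.toPsiDO * hD.toPsiDO) i = Dsq i := by
      rw [← hD.1, pmul_eq_symbolMul]
      rfl
    rw [PsiDO.smul_apply, h]
    change Lax i = _
    have hc : ((1 / 2 : ℚ) • eps ^ 2) * (2 * (eps ^ 2)⁻¹) = 1 := by
      rw [← mul_assoc, mul_comm _ (2 : K), two_mul_half_smul,
        mul_inv_cancel₀ (pow_ne_zero 2 eps_ne_zero)]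
    unfold Lax Dsq
    split_ifs
    · rw [MvPolynomial.smul_eq_C_mul, mul_one]
    · rw [MvPolynomial.smul_eq_C_mul, ← mul_assoc, ← map_mul, hc, map_one, one_mul]
    · rw [smul_zero]
  orderLE := fun i hi => by
    change Lax i = 0
    rw [Lax, if_neg (by omega), if_neg (by omega)]
  apply_two := rfl
  apply_one := rfl
  apply_of_neg := fun i hi => by
    change Lax i = 0
    rw [Lax, if_neg (by omega), if_neg (by omega)]

theorem kdv_X (D : Psi) (k i : ℕ) : kdv D k (MvPolynomial.X i) = d^[i + 1] (GD D k) :=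
  MvPolynomial.mkDerivation_X _ _ _

theorem kdv_comm_d (D : Psi) (k : ℕ) (x : A) : kdv D k (d x) = d (kdv D k x) := by
  refine MvPolynomial.derivation_comm_of_X (fun i => ?_) x
  have hd : d (MvPolynomial.X i) = MvPolynomial.X (i + 1) := MvPolynomial.mkDerivation_X _ _ _
  rw [hd, kdv_X, kdv_X]
  exact Function.iterate_succ_apply' d (i + 1) (GD D k)

instance : CharZero K := algebraRat.charZero K

theorem isLaxFlow_kdv {D : Psi} (hD : IsD D) (k : ℕ) :
    PsiDO.IsLaxFlow laxOp (laxOp ^ k * hD.toPsiDO) ((1 / 2 : ℚ) • eps ^ 2) (kdv D k) where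
  comm := kdv_comm_d D k
  apply_zero := by
    change kdv D k (MvPolynomial.X 0) = _
    rw [← LD_eq_coeff hD, kdv_X, zero_add, Function.iterate_one, GD,
      ← MvPolynomial.smul_eq_C_mul, Derivation.map_smul, MvPolynomial.smul_eq_C_mul,
      MvPolynomial.algebraMap_eq, ← map_ofNat MvPolynomial.C 2, ← map_mul, two_mul_half_smul]

theorem kdv_GD_symm {D : Psi} (hD : IsD D) (m n : ℕ) :
    kdv D m (GD D n) = kdv D n (GD D m) := by
  have h := PsiDO.residue_flow_symm (isLaxRoot_toPsiDO hD) (isLaxFlow_kdv hD m)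
    (isLaxFlow_kdv hD n)
  rw [← LD_eq_coeff hD, ← LD_eq_coeff hD] at h
  simp only [GD, ← MvPolynomial.smul_eq_C_mul, Derivation.map_smul, h]

end KdV

theorem kdv_flows_commute (D : Psi) (hD : IsD D) (m n : ℕ) (x : A) :
    kdv D m (kdv D n x) = kdv D n (kdv D m x) := by
  have hd (k j : ℕ) (y : A) : kdv D k (d^[j] y) = d^[j] (kdv D k y) :=
    (Function.Semiconj.iterate_right (f := kdv D k) (kdv_comm_d D k) j) y
  refine MvPolynomial.derivation_comm_of_X (fun i => ?_) x
  rw [kdv_X, kdv_X, hd, hd, kdv_GD_symm hD m n]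

end
end

section
/- For every k ≥ 1, the following identity holds in B: 𝒟z_k − ∇z_{k+1} = Σ_{m≥0} ( cₖ^{m+1}·tₘ·y_{m+k} + cₖᵐ·s̃ₘ·x_{m+k} + 2dₖᵐ·s̃ₘ·y_{m+k−1} ) + Σ_{i+j=k, i,j≥1} i!·j!·( ε²·∂_{i−1,Q}(y_{j−1}) + Δ⟨⟨τ_{i−1,Q}⟩⟩·y_{j−1} ). -/
/- STATEMENT 16.  For every k ≥ 1, in the large phase space ring B:
𝒟z_k − ∇z_{k+1} = Σₘ( cₖ^{m+1}·tₘ·y_{m+k} + cₖᵐ·s̃ₘ·x_{m+k} + 2dₖᵐ·s̃ₘ·y_{m+k−1} )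
+ Σ_{i+j=k, i,j≥1} i!·j!·( ε²·∂_{i−1,Q}(y_{j−1}) + Δ⟨⟨τ_{i−1,Q}⟩⟩·y_{j−1} ). -/

noncomputable section

/-- index set for the variables of the large phase space of ℂP¹:
`none` is the genus parameter `ε`, `some (inl k)` is `sₖ`, `some (inr k)` is `tₖ`. -/
abbrev Idx : Type := Option (ℕ ⊕ ℕ)

/-- `ℚ[q]`. -/
abbrev Base : Type := Polynomial ℚ

/-- the large phase space ring `B = ℚ[q][[ε]][[s₀,s₁,…,t₀,t₁,…]]`, realized as
formal power series over `ℚ[q]` in `ε` and the `sₖ`, `tₖ`. -/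
abbrev B : Type := MvPowerSeries Idx Base

/-- coefficient extraction. -/
def cf (f : B) (m : Idx →₀ ℕ) : Base := f m

/-- build a power series from its coefficients. -/
def mk' (c : (Idx →₀ ℕ) → Base) : B := c

/-- the variable `sₖ`. -/
def sVar (k : ℕ) : B := MvPowerSeries.X (some (Sum.inl k))

/-- the variable `tₖ`. -/
def tVar (k : ℕ) : B := MvPowerSeries.X (some (Sum.inr k))

/-- the genus parameter `ε`. -/
def epsB : B := MvPowerSeries.X none

/-- `∂_{k,P} = ∂/∂sₖ`, coefficientwise. -/
def pdP (k : ℕ) (f : B) : B :=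
  mk' fun m => ((m (some (Sum.inl k)) : Base) + 1) *
    cf f (m + Finsupp.single (some (Sum.inl k)) 1)

/-- `∂_{k,Q} = ∂/∂tₖ`, coefficientwise. -/
def pdQ (k : ℕ) (f : B) : B :=
  mk' fun m => ((m (some (Sum.inr k)) : Base) + 1) *
    cf f (m + Finsupp.single (some (Sum.inr k)) 1)

/-- `∂ = ∂_{0,P}`. -/
def Dop : B → B := pdP 0

/-- `E^c = exp(cε∂) = Σₘ (cε)ᵐ∂ᵐ/m!`, well defined coefficientwise. -/
def Ec (c : ℚ) (f : B) : B :=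
  mk' fun m => ∑ j ∈ Finset.range (m none + 1),
    (c ^ j / (j.factorial : ℚ)) • cf (Dop^[j] f) (m - Finsupp.single none j)

/-- `∇ = ε⁻¹(E^{1/2} − E^{−1/2}) = Σ_{m≥1} (((1/2)ᵐ − (−1/2)ᵐ)/m!) εᵐ⁻¹ ∂ᵐ`,
well defined coefficientwise (the `m = 0` terms cancel, so no negative powers
of `ε` occur). -/
def nab (f : B) : B :=
  mk' fun m => ∑ j ∈ Finset.range (m none + 1),
    (((1/2 : ℚ) ^ (j+1) - (-1/2 : ℚ) ^ (j+1)) / ((j+1).factorial : ℚ)) •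
      cf (Dop^[j+1] f) (m - Finsupp.single none j)

/-- `Δ = E^{1/2} + E^{−1/2}`, coefficientwise. -/
def Delta (f : B) : B :=
  mk' fun m => ∑ j ∈ Finset.range (m none + 1),
    (((1/2 : ℚ) ^ j + (-1/2 : ℚ) ^ j) / (j.factorial : ℚ)) •
      cf (Dop^[j] f) (m - Finsupp.single none j)

variable (F : B)

/-- `⟨⟨τ_{i,Q}⟩⟩` for `i : ℤ`, with the convention `τ_{−1,Q} = 0`. -/
def tauQ (i : ℤ) : B := if 0 ≤ i then pdQ i.toNat F else 0

/-- `⟨⟨τ_{i,P}⟩⟩` for `i : ℤ`, with the convention `τ_{−1,P} = 0`. -/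
def tauP (i : ℤ) : B := if 0 ≤ i then pdP i.toNat F else 0

/-- `v = ∇∂_QF`. -/
def vB : B := nab (pdQ 0 F)

/-- the operator `𝒟 = v∇ + Δ∘∂_Q`. -/
def Dcal (g : B) : B := vB F * nab g + Delta (pdQ 0 g)

/-- `cₖᵐ = m(m+1)⋯(m+k)` (for `k ≥ −1`; the empty product `1` when `k = −1`). -/
def cc (k : ℤ) (m : ℕ) : ℚ := ∏ l ∈ Finset.range (k + 1).toNat, ((m : ℚ) + l)

/-- `dₖᵐ = eₖ(m, m+1, …, m+k)`, the `k`-th elementary symmetric function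
(`d₋₁ᵐ = 0`, `d₀ᵐ = 1`). -/
def dd (k : ℤ) (m : ℕ) : ℚ :=
  ∑ j ∈ Finset.range (k + 1).toNat,
    ∏ l ∈ (Finset.range (k + 1).toNat).erase j, ((m : ℚ) + l)

/-- the quadratic part `Σ_{i+j=k, i,j≥1} i!·j!·(ε²⟨⟨τ_{i−1,Q}τ_{j−1,Q}⟩⟩ +
⟨⟨τ_{i−1,Q}⟩⟩⟨⟨τ_{j−1,Q}⟩⟩)` of the Virasoro constraint. -/
def quad (k : ℤ) : B :=
  ∑ i ∈ Finset.range (k - 1).toNat,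
    (((i+1).factorial * ((k - (i+1)).toNat.factorial) : ℚ)) •
      (epsB ^ 2 * pdQ i (pdQ ((k - (i+2)).toNat) F) + pdQ i F * pdQ ((k - (i+2)).toNat) F)

/-- the Virasoro constraint `z_k`, `k ≥ −1`: the infinite sums
`Σₘ cₖ^{m+1}tₘ⟨⟨τ_{m+k,Q}⟩⟩ + cₖᵐsₘ⟨⟨τ_{m+k,P}⟩⟩ + 2dₖᵐsₘ⟨⟨τ_{m+k−1,Q}⟩⟩` are
well defined coefficientwise; the terms `s̃ₘ = sₘ − δ_{m,1}` contribute
the corrections `−cₖ¹⟨⟨τ_{k+1,P}⟩⟩ − 2dₖ¹⟨⟨τ_{k,Q}⟩⟩`. -/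
def z (k : ℤ) : B :=
  mk' (fun μ => ∑ j ∈ μ.support,
    match j with
    | some (Sum.inr m) => cc k (m+1) • cf (tauQ F ((m : ℤ) + k)) (μ - Finsupp.single j 1)
    | some (Sum.inl m) => cc k m • cf (tauP F ((m : ℤ) + k)) (μ - Finsupp.single j 1)
        + (2 * dd k m) • cf (tauQ F ((m : ℤ) + k - 1)) (μ - Finsupp.single j 1)
    | none => 0)
  - cc k 1 • tauP F (1 + k) - (2 * dd k 1) • tauQ F k
  + quad F k
  + (if k = -1 then sVar 0 * tVar 0 else 0)
  + (if k = 0 then sVar 0 ^ 2 else 0)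

/-- the constraint `y_k = 𝒟⟨⟨τ_{k,Q}⟩⟩ − (k+2)∇⟨⟨τ_{k+1,Q}⟩⟩`. -/
def y (k : ℕ) : B := Dcal F (pdQ k F) - ((k : ℚ) + 2) • nab (pdQ (k+1) F)

/-- the constraint `x_k = 𝒟⟨⟨τ_{k,P}⟩⟩ − (k+1)∇⟨⟨τ_{k+1,P}⟩⟩ − 2∇⟨⟨τ_{k,Q}⟩⟩`. -/
def x (k : ℕ) : B :=
  Dcal F (pdP k F) - ((k : ℚ) + 1) • nab (pdP (k+1) F) - (2 : ℚ) • nab (pdQ k F)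

open MvPowerSeries

theorem pdP_eq_pderiv (k : ℕ) (f : B) : pdP k f = pderiv Base (some (Sum.inl k)) f := by
  ext1 m
  rw [coeff_pderiv, mul_comm]
  rfl

theorem pdQ_eq_pderiv (k : ℕ) (f : B) : pdQ k f = pderiv Base (some (Sum.inr k)) f := by
  ext1 m
  rw [coeff_pderiv, mul_comm]
  rfl

theorem pderiv_comm (i j : Idx) (f : B) :
    pderiv Base i (pderiv Base j f) = pderiv Base j (pderiv Base i f) := by
  rcases eq_or_ne i j with rfl | h
  · rfl
  ext1 m
  simp only [coeff_pderiv, add_right_comm m (Finsupp.single i 1), Finsupp.add_apply,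
    Finsupp.single_eq_of_ne h, Finsupp.single_eq_of_ne h.symm, add_zero]
  ring

theorem coeff_rat_smul (m : Idx →₀ ℕ) (c : ℚ) (f : B) : coeff m (c • f) = c • coeff m f := rfl

theorem pderiv_rat_smul (i : Idx) (c : ℚ) (f : B) :
    pderiv Base i (c • f) = c • pderiv Base i f :=
  map_rat_smul _ _ _

theorem Dop_eq_pderiv (f : B) : Dop f = pderiv Base (some (Sum.inl 0)) f :=
  pdP_eq_pderiv 0 f

theorem Dop_iterate_add (n : ℕ) (f g : B) : Dop^[n] (f + g) = Dop^[n] f + Dop^[n] g := by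
  induction n generalizing f g with
  | zero => rfl
  | succ n ih => simp only [Function.iterate_succ_apply, Dop_eq_pderiv, map_add, ih]

theorem Dop_iterate_smul (n : ℕ) (c : ℚ) (f : B) : Dop^[n] (c • f) = c • Dop^[n] f := by
  induction n generalizing f with
  | zero => rfl
  | succ n ih => simp only [Function.iterate_succ_apply, Dop_eq_pderiv, pderiv_rat_smul, ih]

theorem Dop_iterate_pderiv (n : ℕ) (i : Idx) (f : B) :
    Dop^[n] (pderiv Base i f) = pderiv Base i (Dop^[n] f) := by
  induction n generalizing f with
  | zero => rfl
  | succ n ih => simp only [Function.iterate_succ_apply, Dop_eq_pderiv, pderiv_comm _ i, ih]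

theorem Dop_mul (f g : B) : Dop (f * g) = f * Dop g + Dop f * g := by
  simp only [Dop_eq_pderiv, Derivation.leibniz, smul_eq_mul, mul_comm]

theorem Dop_iterate_mul (n : ℕ) (f g : B) :
    Dop^[n] (f * g) =
      ∑ p ∈ Finset.HasAntidiagonal.antidiagonal n, (n.choose p.1 : ℚ) • (Dop^[p.1] f * Dop^[p.2] g) := by
  simp only [Nat.cast_smul_eq_nsmul ℚ]
  induction n with
  | zero => simp
  | succ n ih =>
    rw [Function.iterate_succ_apply', ih,
      Finset.sum_antidiagonal_choose_succ_nsmul (fun i j => Dop^[i] f * Dop^[j] g),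
      Dop_eq_pderiv, map_sum, ← Finset.sum_add_distrib]
    refine Finset.sum_congr rfl fun p hp => ?_
    rw [map_nsmul, ← Dop_eq_pderiv, Dop_mul, nsmul_add, ← Function.iterate_succ_apply' Dop,
      ← Function.iterate_succ_apply' Dop,
      Nat.choose_symm_of_eq_add (Finset.HasAntidiagonal.mem_antidiagonal.1 hp).symm]

/-- The operator `Σⱼ aⱼ εʲ ∂ʲ`. -/
def epsOp (a : ℕ → ℚ) : B →ₗ[ℚ] B where
  toFun f := mk' fun m => ∑ j ∈ Finset.range (m none + 1),
    a j • cf (Dop^[j] f) (m - Finsupp.single none j)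
  map_add' f g := by
    ext1 m
    change (∑ j ∈ Finset.range (m none + 1),
        a j • coeff (m - Finsupp.single none j) (Dop^[j] (f + g))) =
      (∑ j ∈ Finset.range (m none + 1), a j • coeff (m - Finsupp.single none j) (Dop^[j] f)) +
        ∑ j ∈ Finset.range (m none + 1), a j • coeff (m - Finsupp.single none j) (Dop^[j] g)
    simp only [Dop_iterate_add, map_add, smul_add, Finset.sum_add_distrib]
  map_smul' c f := by
    ext1 m
    change (∑ j ∈ Finset.range (m none + 1),
        a j • coeff (m - Finsupp.single none j) (Dop^[j] (c • f))) =
      c • ∑ j ∈ Finset.range (m none + 1), a j • coeff (m - Finsupp.single none j) (Dop^[j] f)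
    simp only [Dop_iterate_smul, Finset.smul_sum, coeff_rat_smul]
    exact Finset.sum_congr rfl fun j _ => smul_comm _ _ _

theorem coeff_epsOp (a : ℕ → ℚ) (f : B) (m : Idx →₀ ℕ) :
    coeff m (epsOp a f) = ∑ j ∈ Finset.range (m none + 1),
      a j • coeff (m - Finsupp.single none j) (Dop^[j] f) := rfl

theorem epsOp_pderiv (a : ℕ → ℚ) {i : Idx} (hi : i ≠ none) (f : B) :
    epsOp a (pderiv Base i f) = pderiv Base i (epsOp a f) := by
  ext1 m
  have hm : ∀ j, m + Finsupp.single i 1 - Finsupp.single none j =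
      m - Finsupp.single none j + Finsupp.single i 1 := fun j => by
    ext t
    rcases eq_or_ne t none with rfl | ht
    · simp [Finsupp.single_eq_of_ne hi.symm]
    · simp [Finsupp.single_eq_of_ne ht]
  simp only [coeff_epsOp, coeff_pderiv, Dop_iterate_pderiv, Finsupp.add_apply,
    Finsupp.single_eq_of_ne hi.symm, add_zero, Finset.sum_mul, smul_mul_assoc, hm,
    Finsupp.tsub_apply, Finsupp.single_eq_of_ne hi, tsub_zero]

theorem coeff_epsB_pow_mul (j : ℕ) (f : B) (m : Idx →₀ ℕ) :
    coeff m (epsB ^ j * f) =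
      if j ≤ m none then coeff (m - Finsupp.single none j) f else 0 := by
  rw [epsB, X_pow_eq, coeff_monomial_mul, one_mul]
  simp only [Finsupp.single_le_iff]

theorem epsB_pow_dvd_epsOp_sub (a : ℕ → ℚ) (N : ℕ) (f : B) :
    epsB ^ N ∣ epsOp a f - ∑ j ∈ Finset.range N, a j • (epsB ^ j * Dop^[j] f) := by
  refine X_pow_dvd_iff.2 fun m hm => ?_
  have h : ∀ j, coeff m (a j • (epsB ^ j * Dop^[j] f)) =
      if j ≤ m none then a j • coeff (m - Finsupp.single none j) (Dop^[j] f) else 0 := fun j => by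
    rw [← smul_ite_zero, ← coeff_epsB_pow_mul]
    rfl
  rw [map_sub, map_sum, sub_eq_zero, coeff_epsOp]
  simp only [h]
  rw [← Finset.sum_filter]
  congr 1
  ext j
  simp only [Finset.mem_range, Finset.mem_filter]
  omega

theorem eq_of_epsB_pow_dvd_sub {f g : B} (h : ∀ N, epsB ^ N ∣ f - g) : f = g := by
  ext1 m
  simpa [sub_eq_zero] using X_pow_dvd_iff.1 (h (m none + 1)) m (Nat.lt_succ_self _)

theorem epsOp_mul {a : ℕ → ℚ} (ha : ∀ i j, a i * a j = ((i + j).choose i : ℚ) * a (i + j))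
    (f g : B) : epsOp a (f * g) = epsOp a f * epsOp a g := by
  refine eq_of_epsB_pow_dvd_sub fun N => ?_
  set u : ℕ → B := fun j => a j • (epsB ^ j * Dop^[j] f)
  set v : ℕ → B := fun j => a j • (epsB ^ j * Dop^[j] g)
  have hmul : ∀ i j, u i * v j = (a i * a j) • (epsB ^ (i + j) * (Dop^[i] f * Dop^[j] g)) :=
    fun i j => by
      rw [smul_mul_smul_comm, pow_add]
      congr 1
      ring
  have huv : ∀ j, a j • (epsB ^ j * Dop^[j] (f * g)) =
      ∑ p ∈ Finset.HasAntidiagonal.antidiagonal j, u p.1 * v p.2 := fun j => by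
    rw [Dop_iterate_mul, Finset.mul_sum, Finset.smul_sum]
    refine Finset.sum_congr rfl fun p hp => ?_
    obtain rfl := Finset.HasAntidiagonal.mem_antidiagonal.1 hp
    rw [hmul, ha, mul_smul_comm, smul_smul, mul_comm (a _)]
  have hprod : epsB ^ N ∣ (∑ i ∈ Finset.range N, u i) * (∑ i ∈ Finset.range N, v i) -
      ∑ j ∈ Finset.range N, a j • (epsB ^ j * Dop^[j] (f * g)) := by
    simp only [huv]
    rw [Finset.sum_mul_sum, ← Finset.sum_product', Finset.sum_sigma']
    rw [← Finset.sum_filter_add_sum_filter_not (Finset.range N ×ˢ Finset.range N)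
      (fun p => p.1 + p.2 < N)]
    have : ∑ x ∈ (Finset.range N ×ˢ Finset.range N).filter (fun p => p.1 + p.2 < N),
        u x.1 * v x.2 = ∑ x ∈ (Finset.range N).sigma fun j => Finset.HasAntidiagonal.antidiagonal j,
          u x.2.1 * v x.2.2 := by
      refine Finset.sum_bij' (fun p _ => ⟨p.1 + p.2, p⟩) (fun p _ => p.2) ?_ ?_ ?_ ?_ ?_
      · simp
      · rintro ⟨j, p⟩
        simp only [Finset.mem_sigma, Finset.mem_range, Finset.HasAntidiagonal.mem_antidiagonal, Finset.mem_filter,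
          Finset.mem_product]
        omega
      · simp
      · rintro ⟨j, p⟩ hp
        obtain rfl : p.1 + p.2 = j :=
          Finset.HasAntidiagonal.mem_antidiagonal.1 (Finset.mem_sigma.1 hp).2
        rfl
      · simp
    rw [this, add_sub_cancel_left]
    refine Finset.dvd_sum fun p hp => ?_
    have hp : N ≤ p.1 + p.2 := not_lt.1 (Finset.mem_filter.1 hp).2
    rw [hmul, ← mul_smul_comm]
    exact (pow_dvd_pow _ hp).mul_right _
  have h1 := epsB_pow_dvd_epsOp_sub a N f
  have h2 := epsB_pow_dvd_epsOp_sub a N g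
  have h3 := epsB_pow_dvd_epsOp_sub a N (f * g)
  have h4 := (h1.mul_right (epsOp a g)).add (h2.mul_left (∑ i ∈ Finset.range N, u i))
  convert (h3.sub h4).sub hprod using 1
  ring

theorem Ec_eq_epsOp (c : ℚ) (f : B) :
    Ec c f = epsOp (fun j => c ^ j / (j.factorial : ℚ)) f := rfl

theorem Ec_mul (c : ℚ) (f g : B) : Ec c (f * g) = Ec c f * Ec c g := by
  refine epsOp_mul (fun i j => ?_) f g
  have := Nat.add_choose_mul_factorial_mul_factorial i j
  rw [← Nat.choose_symm_add] at this
  rw [← @Nat.cast_inj ℚ] at this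
  push_cast at this
  field_simp
  rw [pow_add, ← this]
  ring

/-- The operator `∇` as a linear map. -/
def nabLin : B →ₗ[ℚ] B where
  toFun := nab
  map_add' f g := by
    change epsOp _ (Dop (f + g)) = epsOp _ (Dop f) + epsOp _ (Dop g)
    rw [Dop_eq_pderiv, map_add, map_add, Dop_eq_pderiv, Dop_eq_pderiv]
  map_smul' c f := by
    change epsOp _ (Dop (c • f)) = c • epsOp _ (Dop f)
    rw [Dop_eq_pderiv, pderiv_rat_smul, map_smul, Dop_eq_pderiv]

/-- The operator `Δ` as a linear map. -/
def DeltaLin : B →ₗ[ℚ] B :=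
  epsOp fun j => ((1/2 : ℚ) ^ j + (-1/2 : ℚ) ^ j) / (j.factorial : ℚ)

theorem nab_eq (f : B) : nab f = nabLin f := rfl

theorem Delta_eq (f : B) : Delta f = DeltaLin f := rfl

theorem Delta_eq_Ec (f : B) : Delta f = Ec (1/2) f + Ec (-1/2) f := by
  ext1 m
  rw [map_add, Ec_eq_epsOp, Ec_eq_epsOp, Delta_eq, DeltaLin, coeff_epsOp, coeff_epsOp,
    coeff_epsOp, ← Finset.sum_add_distrib]
  exact Finset.sum_congr rfl fun j _ => by rw [add_div, add_smul]

theorem epsB_mul_nab (f : B) : epsB * nab f = Ec (1/2) f - Ec (-1/2) f := by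
  ext1 m
  rw [map_sub, Ec_eq_epsOp, Ec_eq_epsOp, coeff_epsOp, coeff_epsOp, ← Finset.sum_sub_distrib,
    Finset.sum_range_succ', ← pow_one epsB, coeff_epsB_pow_mul]
  simp only [← sub_smul, ← sub_div, pow_zero, sub_self, add_zero]
  split_ifs with h
  · change (∑ j ∈ Finset.range ((m - Finsupp.single none 1 : Idx →₀ ℕ) none + 1), _) = _
    refine Finset.sum_congr ?_ fun j _ => ?_
    · simp only [Finsupp.tsub_apply, Finsupp.single_eq_same]
      rw [Nat.sub_add_cancel h]
    · change _ • coeff _ _ = _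
      rw [tsub_tsub, ← Finsupp.single_add, add_comm 1 j, ← Function.iterate_succ_apply]
  · rw [not_le, Nat.lt_one_iff] at h
    simp [h]

theorem epsB_ne_zero : epsB ≠ 0 := by
  intro h
  have := congrArg (coeff (Finsupp.single none 1)) h
  simp [epsB] at this

theorem two_mul_nab_mul (f g : B) :
    2 * nab (f * g) = nab f * Delta g + Delta f * nab g := by
  refine mul_left_cancel₀ epsB_ne_zero ?_
  have h := epsB_mul_nab (f * g)
  rw [Ec_mul, Ec_mul] at h
  rw [Delta_eq_Ec, Delta_eq_Ec]
  linear_combination 2 * h - (Ec (1/2) g + Ec (-1/2) g) * epsB_mul_nab f -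
    (Ec (1/2) f + Ec (-1/2) f) * epsB_mul_nab g

theorem two_mul_Delta_mul (f g : B) :
    2 * Delta (f * g) = Delta f * Delta g + epsB ^ 2 * (nab f * nab g) := by
  rw [Delta_eq_Ec, Delta_eq_Ec, Delta_eq_Ec, Ec_mul, Ec_mul]
  linear_combination - epsB * nab g * epsB_mul_nab f -
    (Ec (1/2) f - Ec (-1/2) f) * epsB_mul_nab g

theorem Dop_iterate_zero (n : ℕ) : Dop^[n] (0 : B) = 0 :=
  Function.iterate_fixed (by rw [Dop_eq_pderiv, map_zero]) n

theorem epsOp_of_Dop_eq_zero (a : ℕ → ℚ) {f : B} (hf : Dop f = 0) : epsOp a f = a 0 • f := by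
  ext1 m
  rw [coeff_epsOp, Finset.sum_range_succ']
  simp [Function.iterate_succ_apply, hf, Dop_iterate_zero]

theorem nab_of_Dop_Dop_eq_zero {f : B} (hf : Dop (Dop f) = 0) : nab f = Dop f := by
  change epsOp (fun j => ((1/2 : ℚ) ^ (j+1) - (-1/2 : ℚ) ^ (j+1)) / ((j+1).factorial : ℚ))
    (Dop f) = Dop f
  rw [epsOp_of_Dop_eq_zero _ hf]
  norm_num

theorem Delta_of_Dop_Dop_eq_zero {f : B} (hf : Dop (Dop f) = 0) : Delta f = 2 * f := by
  ext1 m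
  rw [Delta_eq, DeltaLin, coeff_epsOp, Finset.sum_range_succ', Finset.sum_eq_zero]
  · rw [two_mul, map_add]
    norm_num [two_smul]
  · rintro (_ | j) -
    · norm_num
    · simp [Function.iterate_succ_apply, hf, Dop_iterate_zero]

theorem Dop_X (j : Idx) : Dop (X j : B) = if j = some (Sum.inl 0) then 1 else 0 := by
  rw [Dop_eq_pderiv]
  split_ifs with h
  · rw [h, pderiv_X_self]
  · rw [pderiv_X_of_ne h]

theorem Dop_Dop_X (j : Idx) : Dop (Dop (X j : B)) = 0 := by
  rw [Dop_X, Dop_eq_pderiv]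
  split_ifs <;> simp

theorem nab_X (j : Idx) : nab (X j : B) = if j = some (Sum.inl 0) then 1 else 0 := by
  rw [nab_of_Dop_Dop_eq_zero (Dop_Dop_X j), Dop_X]

theorem Delta_X (j : Idx) : Delta (X j : B) = 2 * X j :=
  Delta_of_Dop_Dop_eq_zero (Dop_Dop_X j)

theorem pdQ_X (j : Idx) : pdQ 0 (X j : B) = if j = some (Sum.inr 0) then 1 else 0 := by
  rw [pdQ_eq_pderiv]
  split_ifs with h
  · rw [h, pderiv_X_self]
  · rw [pderiv_X_of_ne h]

theorem nab_pderiv {i : Idx} (hi : i ≠ none) (f : B) :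
    nab (pderiv Base i f) = pderiv Base i (nab f) := by
  change epsOp _ (Dop (pderiv Base i f)) = pderiv Base i (epsOp _ (Dop f))
  rw [← epsOp_pderiv _ hi, Dop_eq_pderiv, Dop_eq_pderiv, pderiv_comm]

theorem nab_pdQ (i : ℕ) (f : B) : nab (pdQ i f) = pdQ i (nab f) := by
  rw [pdQ_eq_pderiv, pdQ_eq_pderiv, nab_pderiv (by simp)]

theorem Delta_pdQ (i : ℕ) (f : B) : Delta (pdQ i f) = pdQ i (Delta f) := by
  rw [pdQ_eq_pderiv, pdQ_eq_pderiv, Delta_eq, Delta_eq, DeltaLin, epsOp_pderiv _ (by simp)]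

theorem pdQ_comm (i j : ℕ) (f : B) : pdQ i (pdQ j f) = pdQ j (pdQ i f) := by
  simp only [pdQ_eq_pderiv, pderiv_comm (some (Sum.inr i))]

theorem pdQ_add (i : ℕ) (f g : B) : pdQ i (f + g) = pdQ i f + pdQ i g := by
  simp only [pdQ_eq_pderiv, map_add]

theorem pdQ_mul (i : ℕ) (f g : B) : pdQ i (f * g) = pdQ i f * g + f * pdQ i g := by
  simp only [pdQ_eq_pderiv, Derivation.leibniz, smul_eq_mul]
  ring

theorem mul_left_cancel_two {f g : B} (h : 2 * f = 2 * g) : f = g := by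
  ext1 m
  have h := congrArg (coeff m) h
  rw [two_mul, two_mul, map_add, map_add, ← two_mul, ← two_mul] at h
  exact mul_left_cancel₀ two_ne_zero h

/-- The operator `𝒟` as a linear map. -/
def DcalLin (F : B) : B →ₗ[ℚ] B where
  toFun := Dcal F
  map_add' f g := by
    simp only [Dcal, pdQ_add, nab_eq, Delta_eq, map_add]
    ring
  map_smul' c f := by
    simp only [Dcal, pdQ_eq_pderiv, pderiv_rat_smul, nab_eq, Delta_eq, map_smul, mul_smul_comm,
      smul_add, RingHom.id_apply]

theorem Dcal_eq (F f : B) : Dcal F f = DcalLin F f := rfl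

theorem two_mul_Dcal_mul (F f g : B) :
    2 * Dcal F (f * g) = Dcal F f * Delta g + Delta f * Dcal F g +
      epsB ^ 2 * (nab (pdQ 0 f) * nab g + nab f * nab (pdQ 0 g)) := by
  simp only [Dcal, pdQ_mul, Delta_eq, map_add]
  simp only [← Delta_eq]
  linear_combination vB F * two_mul_nab_mul f g + two_mul_Delta_mul (pdQ 0 f) g +
    two_mul_Delta_mul f (pdQ 0 g)

theorem Dop_epsB_sq : Dop (epsB ^ 2) = 0 := by
  rw [sq, Dop_mul, epsB, Dop_X]
  simp

theorem pdQ_epsB_sq_mul (i : ℕ) (f : B) : pdQ i (epsB ^ 2 * f) = epsB ^ 2 * pdQ i f := by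
  have h : pdQ i epsB = 0 := by
    rw [pdQ_eq_pderiv, epsB, pderiv_X_of_ne (by simp)]
  rw [pdQ_mul, sq, pdQ_mul, h]
  ring

theorem nab_epsB_sq_mul (f : B) : nab (epsB ^ 2 * f) = epsB ^ 2 * nab f := by
  have h0 : Dop (Dop (epsB ^ 2)) = 0 := by rw [Dop_epsB_sq]; exact Dop_iterate_zero 1
  have h := two_mul_nab_mul (epsB ^ 2) f
  rw [nab_of_Dop_Dop_eq_zero h0, Dop_epsB_sq, Delta_of_Dop_Dop_eq_zero h0] at h
  exact mul_left_cancel_two (by linear_combination h)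

theorem Delta_epsB_sq_mul (f : B) : Delta (epsB ^ 2 * f) = epsB ^ 2 * Delta f := by
  have h0 : Dop (Dop (epsB ^ 2)) = 0 := by rw [Dop_epsB_sq]; exact Dop_iterate_zero 1
  have h := two_mul_Delta_mul (epsB ^ 2) f
  rw [nab_of_Dop_Dop_eq_zero h0, Dop_epsB_sq, Delta_of_Dop_Dop_eq_zero h0] at h
  exact mul_left_cancel_two (by linear_combination h)

theorem Dcal_epsB_sq_mul (F f : B) : Dcal F (epsB ^ 2 * f) = epsB ^ 2 * Dcal F f := by
  rw [Dcal, nab_epsB_sq_mul, pdQ_epsB_sq_mul, Delta_epsB_sq_mul, Dcal]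
  ring

theorem pdQ_Dcal (F : B) (i : ℕ) (f : B) :
    pdQ i (Dcal F f) = Dcal F (pdQ i f) + nab (pdQ 0 (pdQ i F)) * nab f := by
  rw [Dcal, Dcal, vB, pdQ_add, pdQ_mul, ← nab_pdQ, ← nab_pdQ, ← Delta_pdQ, pdQ_comm i 0 f,
    pdQ_comm i 0 F]
  ring

theorem two_mul_Dcal_X_mul_sub (F : B) (j : Idx) (f g : B) :
    2 * (Dcal F (X j * f) - nab (X j * g)) = 2 * (X j * (Dcal F f - nab g)) +
      (if j = some (Sum.inl 0) then
        vB F * Delta f + epsB ^ 2 * nab (pdQ 0 f) - Delta g else 0) +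
      (if j = some (Sum.inr 0) then 2 * Delta f else 0) := by
  have h1 := two_mul_Dcal_mul F (X j) f
  have h2 := two_mul_nab_mul (X j) g
  have h3 : Dcal F (X j) = (if j = some (Sum.inl 0) then vB F else 0) +
      (if j = some (Sum.inr 0) then 2 else 0) := by
    have h1' : Dop (1 : B) = 0 := by rw [Dop_eq_pderiv, pderiv_one]
    have h1'' : Delta (1 : B) = 2 := by
      rw [Delta_of_Dop_Dop_eq_zero (by rw [h1']; exact Dop_iterate_zero 1), mul_one]
    rw [Dcal, nab_X, pdQ_X]
    congr 1
    · split_ifs <;> simp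
    · split_ifs
      · exact h1''
      · rw [Delta_eq, map_zero]
  have h4 : nab (pdQ 0 (X j : B)) = 0 := by
    rw [nab_pdQ, nab_X, pdQ_eq_pderiv]
    split_ifs <;> simp
  rw [Delta_X, h3, h4, nab_X] at h1
  rw [nab_X, Delta_X] at h2
  split_ifs at * <;> linear_combination h1 - h2

/-- The quadratic correction produced by applying `𝒟` and `∇` to the linear part of a
Virasoro constraint. -/
def boundaryTerm (F : B) (n : ℕ) : B :=
  epsB ^ 2 * pdQ n (nab (pdQ 0 F)) + Delta (pdQ n F) * nab (pdQ 0 F)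

theorem quad_natCast_add_one (F : B) (n : ℕ) :
    quad F ((n : ℤ) + 1) = ∑ i ∈ Finset.range n,
      (((i+1).factorial * (n - i).factorial : ℚ)) •
        (epsB ^ 2 * pdQ i (pdQ (n - 1 - i) F) + pdQ i F * pdQ (n - 1 - i) F) := by
  rw [quad, show ((n : ℤ) + 1 - 1).toNat = n by simp]
  refine Finset.sum_congr rfl fun i _ => ?_
  rw [show ((n : ℤ) + 1 - (i + 1)).toNat = n - i by omega,
    show ((n : ℤ) + 1 - (i + 2)).toNat = n - 1 - i by omega]

theorem sum_range_eq_zero_of_reflect {n : ℕ} {f : ℕ → B}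
    (h : ∀ i < n, f (n - 1 - i) = -f i) : ∑ i ∈ Finset.range n, f i = 0 := by
  have h1 := Finset.sum_range_reflect f n
  rw [Finset.sum_congr rfl fun i hi => h i (Finset.mem_range.1 hi), Finset.sum_neg_distrib] at h1
  exact mul_left_cancel_two (by linear_combination -h1)

theorem two_mul_rat_smul (c : ℚ) (f : B) : 2 * c • f = c • (2 * f) :=
  mul_smul_comm _ _ _

theorem nab_quad (F : B) (n : ℕ) :
    nab (quad F ((n : ℤ) + 1)) = ∑ i ∈ Finset.range n,
      (((i+1).factorial * (n - i).factorial : ℚ)) •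
        (epsB ^ 2 * pdQ i (nab (pdQ (n - 1 - i) F)) +
          Delta (pdQ i F) * nab (pdQ (n - 1 - i) F)) := by
  refine mul_left_cancel_two ?_
  rw [quad_natCast_add_one, nab_eq, map_sum, Finset.mul_sum, Finset.mul_sum, ← sub_eq_zero,
    ← Finset.sum_sub_distrib]
  have h : ∀ i, 2 * nabLin ((((i+1).factorial * (n - i).factorial : ℚ)) •
        (epsB ^ 2 * pdQ i (pdQ (n - 1 - i) F) + pdQ i F * pdQ (n - 1 - i) F)) -
      2 * ((((i+1).factorial * (n - i).factorial : ℚ)) •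
        (epsB ^ 2 * pdQ i (nab (pdQ (n - 1 - i) F)) +
          Delta (pdQ i F) * nab (pdQ (n - 1 - i) F))) =
      (((i+1).factorial * (n - i).factorial : ℚ)) •
        (nab (pdQ i F) * Delta (pdQ (n - 1 - i) F) -
          Delta (pdQ i F) * nab (pdQ (n - 1 - i) F)) := fun i => by
    rw [map_smul, map_add, two_mul_rat_smul, two_mul_rat_smul, ← smul_sub, ← nab_eq, ← nab_eq,
      nab_epsB_sq_mul, nab_pdQ]
    congr 1
    linear_combination two_mul_nab_mul (pdQ i F) (pdQ (n - 1 - i) F)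
  simp only [h]
  refine sum_range_eq_zero_of_reflect fun i hi => ?_
  rw [show n - 1 - i + 1 = n - i by omega, show n - (n - 1 - i) = i + 1 by omega,
    show n - 1 - (n - 1 - i) = i by omega, ← smul_neg, mul_comm (((n - i).factorial : ℕ) : ℚ)]
  congr 1
  ring

theorem Dcal_quad (F : B) (n : ℕ) :
    Dcal F (quad F ((n : ℤ) + 1)) = ∑ i ∈ Finset.range n,
      (((i+1).factorial * (n - i).factorial : ℚ)) •
        (epsB ^ 2 * pdQ i (Dcal F (pdQ (n - 1 - i) F)) +
          Delta (pdQ i F) * Dcal F (pdQ (n - 1 - i) F)) := by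
  refine mul_left_cancel_two ?_
  rw [quad_natCast_add_one, Dcal_eq, map_sum, Finset.mul_sum, Finset.mul_sum, ← sub_eq_zero,
    ← Finset.sum_sub_distrib]
  have h : ∀ i, 2 * DcalLin F ((((i+1).factorial * (n - i).factorial : ℚ)) •
        (epsB ^ 2 * pdQ i (pdQ (n - 1 - i) F) + pdQ i F * pdQ (n - 1 - i) F)) -
      2 * ((((i+1).factorial * (n - i).factorial : ℚ)) •
        (epsB ^ 2 * pdQ i (Dcal F (pdQ (n - 1 - i) F)) +
          Delta (pdQ i F) * Dcal F (pdQ (n - 1 - i) F))) =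
      (((i+1).factorial * (n - i).factorial : ℚ)) •
        (Dcal F (pdQ i F) * Delta (pdQ (n - 1 - i) F) -
          Delta (pdQ i F) * Dcal F (pdQ (n - 1 - i) F) +
          epsB ^ 2 * (nab (pdQ i F) * nab (pdQ 0 (pdQ (n - 1 - i) F)) -
            nab (pdQ 0 (pdQ i F)) * nab (pdQ (n - 1 - i) F))) := fun i => by
    rw [map_smul, map_add, two_mul_rat_smul, two_mul_rat_smul, ← smul_sub, ← Dcal_eq, ← Dcal_eq,
      Dcal_epsB_sq_mul, pdQ_Dcal]
    congr 1
    linear_combination two_mul_Dcal_mul F (pdQ i F) (pdQ (n - 1 - i) F)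
  simp only [h]
  refine sum_range_eq_zero_of_reflect fun i hi => ?_
  rw [show n - 1 - i + 1 = n - i by omega, show n - (n - 1 - i) = i + 1 by omega,
    show n - 1 - (n - 1 - i) = i by omega, ← smul_neg, mul_comm (((n - i).factorial : ℕ) : ℚ)]
  congr 1
  ring

theorem Dcal_quad_sub_nab_quad (F : B) (n : ℕ) :
    Dcal F (quad F ((n : ℤ) + 1)) - nab (quad F ((n : ℤ) + 2)) =
      ∑ i ∈ Finset.range n, (((i+1).factorial * (n - i).factorial : ℚ)) •
        (epsB ^ 2 * pdQ i (y F (n - 1 - i)) + Delta (pdQ i F) * y F (n - 1 - i)) -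
      ((n + 1).factorial : ℚ) • boundaryTerm F n := by
  have h : (n : ℤ) + 2 = ((n + 1 : ℕ) : ℤ) + 1 := by push_cast; ring
  rw [h, nab_quad, Dcal_quad, Finset.sum_range_succ, sub_add_eq_sub_sub,
    ← Finset.sum_sub_distrib]
  refine congrArg₂ (· - ·) ?_ ?_
  · refine Finset.sum_congr rfl fun i hi => ?_
    obtain ⟨l, rfl⟩ : ∃ l, n = i + 1 + l := Nat.exists_eq_add_of_le (Finset.mem_range.1 hi)
    rw [show i + 1 + l - i = l + 1 by omega, show i + 1 + l + 1 - i = l + 2 by omega,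
      show i + 1 + l - 1 - i = l by omega, show i + 1 + l + 1 - 1 - i = l + 1 by omega, y,
      Nat.factorial_succ (l + 1)]
    simp only [pdQ_eq_pderiv i, map_sub, pderiv_rat_smul, mul_sub, mul_smul_comm]
    push_cast
    module
  · simp [boundaryTerm]

/-- `f` vanishes after setting all the variables outside `S` to zero. -/
def VanishesOn (S : Set Idx) (f : B) : Prop :=
  ∀ m : Idx →₀ ℕ, (m.support : Set Idx) ⊆ S → coeff m f = 0

namespace VanishesOn

variable {S : Set Idx} {f g : B}

theorem add (hf : VanishesOn S f) (hg : VanishesOn S g) : VanishesOn S (f + g) :=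
  fun m hm => by rw [map_add, hf m hm, hg m hm, add_zero]

theorem sub (hf : VanishesOn S f) (hg : VanishesOn S g) : VanishesOn S (f - g) :=
  fun m hm => by rw [map_sub, hf m hm, hg m hm, sub_zero]

theorem mul_left (hf : VanishesOn S f) (a : B) : VanishesOn S (a * f) := fun m hm => by
  classical
  rw [coeff_mul]
  refine Finset.sum_eq_zero fun p hp => ?_
  rw [hf p.2 ((Finset.coe_subset.2 (Finsupp.support_mono ?_)).trans hm), mul_zero]
  rw [← Finset.HasAntidiagonal.mem_antidiagonal.1 hp]
  exact le_add_self

theorem pderiv (hf : VanishesOn S f) {i : Idx} (hi : i ∈ S) :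
    VanishesOn S (MvPowerSeries.pderiv Base i f) := fun m hm => by
  classical
  rw [coeff_pderiv, hf, zero_mul]
  intro j hj
  rcases Finset.mem_union.1 (Finsupp.support_add hj) with h | h
  · exact hm h
  · rwa [Finset.mem_singleton.1 (Finsupp.support_single_subset h)]

theorem pdQ (hf : VanishesOn S f) {i : ℕ} (hi : some (Sum.inr i) ∈ S) :
    VanishesOn S (pdQ i f) := by
  rw [pdQ_eq_pderiv]
  exact hf.pderiv hi

theorem Dop (hf : VanishesOn S f) (h : some (Sum.inl 0) ∈ S) : VanishesOn S (Dop f) := by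
  rw [Dop_eq_pderiv]
  exact hf.pderiv h

theorem Dop_iterate (hf : VanishesOn S f) (h : some (Sum.inl 0) ∈ S) (n : ℕ) :
    VanishesOn S (_root_.Dop^[n] f) := by
  induction n generalizing f with
  | zero => exact hf
  | succ n ih => exact ih (hf.Dop h)

theorem epsOp (hf : VanishesOn S f) (h : some (Sum.inl 0) ∈ S) (a : ℕ → ℚ) :
    VanishesOn S (epsOp a f) := fun m hm => by
  rw [coeff_epsOp]
  refine Finset.sum_eq_zero fun j _ => ?_
  rw [hf.Dop_iterate h j, smul_zero]
  exact (Finset.coe_subset.2 (Finsupp.support_mono tsub_le_self)).trans hm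

theorem nab (hf : VanishesOn S f) (h : some (Sum.inl 0) ∈ S) : VanishesOn S (nab f) :=
  (hf.Dop h).epsOp h _

theorem Dcal (hf : VanishesOn S f) (hP : some (Sum.inl 0) ∈ S) (hQ : some (Sum.inr 0) ∈ S)
    (F : B) : VanishesOn S (Dcal F f) :=
  ((hf.nab hP).mul_left _).add ((hf.pdQ hQ).epsOp hP _)

end VanishesOn

/-- The formal sum `Σⱼ Xⱼ Gⱼ`. -/
def linComb (G : Idx → B) : B :=
  mk' fun μ => ∑ j ∈ μ.support, cf (G j) (μ - Finsupp.single j 1)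

theorem vanishesOn_linComb_sub_sum (S : Finset Idx) (G : Idx → B) :
    VanishesOn S (linComb G - ∑ j ∈ S, X j * G j) := fun m hm => by
  classical
  have h : ∀ j, coeff m (X j * G j) =
      if j ∈ m.support then coeff (m - Finsupp.single j 1) (G j) else 0 := fun j => by
    rw [X, coeff_monomial_mul, one_mul]
    simp only [Finsupp.single_le_iff, Finsupp.mem_support_iff, Nat.one_le_iff_ne_zero]
  rw [map_sub, map_sum, sub_eq_zero]
  simp only [h]
  rw [← Finset.sum_filter, Finset.filter_mem_eq_inter,
    Finset.inter_eq_right.2 (Finset.coe_subset.1 hm)]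
  rfl

theorem cc_succ (k m : ℕ) : cc ((k : ℤ) + 1) m = cc k m * (m + k + 1) := by
  rw [cc, cc, show ((k : ℤ) + 1 + 1).toNat = k + 1 + 1 by omega,
    show ((k : ℤ) + 1).toNat = k + 1 by omega, Finset.prod_range_succ]
  push_cast
  ring

theorem dd_succ (k m : ℕ) : dd ((k : ℤ) + 1) m = dd k m * (m + k + 1) + cc k m := by
  rw [cc, dd, dd, show ((k : ℤ) + 1 + 1).toNat = k + 1 + 1 by omega,
    show ((k : ℤ) + 1).toNat = k + 1 by omega, Finset.sum_range_succ,
    Finset.range_add_one (n := k + 1),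
    Finset.erase_insert Finset.notMem_range_self, Finset.sum_mul]
  congr 1
  refine Finset.sum_congr rfl fun j hj => ?_
  rw [Finset.erase_insert_of_ne (Finset.mem_range.1 hj).ne', Finset.prod_insert]
  · push_cast
    ring
  · simp

theorem cc_zero_right (k : ℕ) : cc k 0 = 0 := by
  rw [cc, show ((k : ℤ) + 1).toNat = k + 1 by omega, Finset.prod_range_succ']
  simp

theorem cc_one_right (k : ℕ) : cc k 1 = (k + 1).factorial := by
  induction k with
  | zero => simp [cc]
  | succ k ih =>
    rw [Nat.cast_succ, cc_succ, ih, Nat.factorial_succ (k + 1)]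
    push_cast
    ring

theorem dd_zero_right (k : ℕ) : dd k 0 = k.factorial := by
  induction k with
  | zero => simp [dd]
  | succ k ih =>
    rw [Nat.cast_succ, dd_succ, ih, cc_zero_right, Nat.factorial_succ]
    push_cast
    ring

/-- The coefficients of the variables in the linear part of the Virasoro constraint `z_k`. -/
def zCoeff (F : B) (k : ℕ) : Idx → B
  | some (Sum.inr m) => cc k (m + 1) • pdQ (m + k) F
  | some (Sum.inl m) => cc k m • pdP (m + k) F + (2 * dd k m) • pdQ (m + k - 1) F
  | none => 0

/-- The coefficients of the variables in the linear part of `𝒟z_k − ∇z_{k+1}`. -/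
def yxCoeff (F : B) (k : ℕ) : Idx → B
  | some (Sum.inr m) => cc k (m + 1) • y F (m + k)
  | some (Sum.inl m) => cc k m • x F (m + k) + (2 * dd k m) • y F (m + k - 1)
  | none => 0

theorem tauQ_natCast (F : B) (i : ℕ) : tauQ F i = pdQ i F := by
  simp [tauQ]

theorem tauP_natCast (F : B) (i : ℕ) : tauP F i = pdP i F := by
  simp [tauP]

theorem z_eq_linComb (F : B) {k : ℕ} (hk : 1 ≤ k) :
    z F k = linComb (zCoeff F k) - zCoeff F k (some (Sum.inl 1)) + quad F k := by
  have h1 : (1 : ℤ) + k = ((1 + k : ℕ) : ℤ) := by push_cast; rfl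
  have h2 : ∀ m : ℕ, (m : ℤ) + k = ((m + k : ℕ) : ℤ) := fun m => by push_cast; rfl
  have h3 : ∀ m : ℕ, ((m + k : ℕ) : ℤ) - 1 = ((m + k - 1 : ℕ) : ℤ) := fun m => by omega
  rw [z, if_neg (by omega), if_neg (by omega), add_zero, add_zero, h1, tauP_natCast,
    tauQ_natCast, sub_sub, zCoeff, Nat.add_sub_cancel_left]
  congr 2
  ext1 μ
  refine Finset.sum_congr rfl fun j _ => ?_
  rcases j with _ | m | m
  · rfl
  · simp only [h2, h3, tauP_natCast, tauQ_natCast]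
    rfl
  · simp only [h2, tauQ_natCast]
    rfl

theorem Dcal_zCoeff_sub_nab_zCoeff (F : B) {k : ℕ} (hk : 1 ≤ k) (j : Idx) :
    Dcal F (zCoeff F k j) - nab (zCoeff F (k + 1) j) = yxCoeff F k j := by
  obtain ⟨n, rfl⟩ := Nat.exists_eq_add_of_le' hk
  rcases j with _ | m | m
  · simp [zCoeff, yxCoeff, Dcal_eq, nab_eq]
  · rw [zCoeff, zCoeff, yxCoeff, Nat.cast_succ (n + 1), cc_succ, dd_succ, x, y,
      show m + (n + 1) - 1 = m + n by omega, show m + (n + 1 + 1) - 1 = m + n + 1 by omega,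
      show m + (n + 1 + 1) = m + n + 1 + 1 by omega, show m + (n + 1) = m + n + 1 by omega]
    simp only [Dcal_eq, nab_eq, map_add, map_smul]
    push_cast
    module
  · rw [zCoeff, zCoeff, yxCoeff, Nat.cast_succ (n + 1), cc_succ, y,
      show m + (n + 1 + 1) = m + (n + 1) + 1 by omega]
    simp only [Dcal_eq, nab_eq, map_smul]
    push_cast
    module

theorem zCoeff_inl_zero (F : B) (n : ℕ) :
    zCoeff F (n + 1) (some (Sum.inl 0)) = (2 * (n + 1).factorial : ℚ) • pdQ n F := by
  rw [zCoeff, cc_zero_right, dd_zero_right, zero_smul, zero_add, zero_add, Nat.add_sub_cancel]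

theorem zCoeff_inr_zero (F : B) (n : ℕ) :
    zCoeff F (n + 1) (some (Sum.inr 0)) = ((n + 2).factorial : ℚ) • pdQ (n + 1) F := by
  rw [zCoeff, zero_add, zero_add, cc_one_right]

theorem Dcal_sum_zCoeff_sub_nab_sum_zCoeff (F : B) (n : ℕ) {S : Finset Idx}
    (hP : some (Sum.inl 0) ∈ S) (hQ : some (Sum.inr 0) ∈ S) :
    Dcal F (∑ j ∈ S, X j * zCoeff F (n + 1) j) - nab (∑ j ∈ S, X j * zCoeff F (n + 2) j) =
      ∑ j ∈ S, X j * yxCoeff F (n + 1) j + ((n + 1).factorial : ℚ) • boundaryTerm F n := by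
  classical
  refine mul_left_cancel_two ?_
  rw [Dcal_eq, nab_eq, map_sum, map_sum, ← Finset.sum_sub_distrib, Finset.mul_sum]
  simp only [← Dcal_eq, ← nab_eq, two_mul_Dcal_X_mul_sub]
  rw [Finset.sum_add_distrib, Finset.sum_add_distrib]
  simp only [Dcal_zCoeff_sub_nab_zCoeff F (Nat.le_add_left 1 n)]
  rw [Finset.sum_ite_eq' S (some (Sum.inl 0)), if_pos hP,
    Finset.sum_ite_eq' S (some (Sum.inr 0)), if_pos hQ, ← Finset.mul_sum,
    zCoeff_inl_zero, zCoeff_inl_zero, zCoeff_inr_zero, boundaryTerm, mul_add, add_assoc, vB,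
    pdQ_eq_pderiv 0 (_ • _), pderiv_rat_smul, ← pdQ_eq_pderiv, pdQ_comm 0 n, ← nab_pdQ n]
  simp only [Delta_eq, nab_eq, map_smul, mul_smul_comm, mul_comm (DeltaLin (pdQ n F)), two_mul]
  congr 1
  module

theorem virasoro_toda_master_identity (F : B) (k : ℕ) (hk : 1 ≤ k) :
    Dcal F (z F k) - nab (z F ((k : ℤ) + 1)) =
      mk' (fun μ => ∑ j ∈ μ.support,
        match j with
        | some (Sum.inr m) => cc k (m+1) • cf (y F (m + k)) (μ - Finsupp.single j 1)
        | some (Sum.inl m) => cc k m • cf (x F (m + k)) (μ - Finsupp.single j 1)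
            + (2 * dd k m) • cf (y F (m + k - 1)) (μ - Finsupp.single j 1)
        | none => 0)
      - cc k 1 • x F (k + 1) - (2 * dd k 1) • y F k
      + ∑ i ∈ Finset.range (k - 1),
          (((i+1).factorial * (k - (i+1)).factorial : ℚ)) •
            (epsB ^ 2 * pdQ i (y F (k - (i+2))) + Delta (pdQ i F) * y F (k - (i+2))) := by
  classical
  have hlin : mk' (fun μ => ∑ j ∈ μ.support,
        match j with
        | some (Sum.inr m) => cc k (m+1) • cf (y F (m + k)) (μ - Finsupp.single j 1)
        | some (Sum.inl m) => cc k m • cf (x F (m + k)) (μ - Finsupp.single j 1)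
            + (2 * dd k m) • cf (y F (m + k - 1)) (μ - Finsupp.single j 1)
        | none => 0) = linComb (yxCoeff F k) := by
    ext1 μ
    refine Finset.sum_congr rfl fun j _ => ?_
    rcases j with _ | m | m <;> rfl
  rw [hlin]
  obtain ⟨n, rfl⟩ := Nat.exists_eq_add_of_le' hk
  have hquad := Dcal_quad_sub_nab_quad F n
  have hcorr := Dcal_zCoeff_sub_nab_zCoeff F hk (some (Sum.inl 1))
  have hyx : yxCoeff F (n + 1) (some (Sum.inl 1)) =
      cc (n + 1 : ℕ) 1 • x F (n + 1 + 1) + (2 * dd (n + 1 : ℕ) 1) • y F (n + 1) := by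
    rw [yxCoeff, Nat.add_sub_cancel_left, add_comm 1 (n + 1)]
  have hsum : ∑ i ∈ Finset.range (n + 1 - 1),
      (((i+1).factorial * (n + 1 - (i+1)).factorial : ℚ)) •
        (epsB ^ 2 * pdQ i (y F (n + 1 - (i+2))) + Delta (pdQ i F) * y F (n + 1 - (i+2))) =
      ∑ i ∈ Finset.range n, (((i+1).factorial * (n - i).factorial : ℚ)) •
        (epsB ^ 2 * pdQ i (y F (n - 1 - i)) + Delta (pdQ i F) * y F (n - 1 - i)) := by
    rw [Nat.add_sub_cancel]
    refine Finset.sum_congr rfl fun i _ => ?_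
    rw [show n + 1 - (i + 1) = n - i by omega, show n + 1 - (i + 2) = n - 1 - i by omega]
  rw [sub_sub, ← hyx, hsum, ← Nat.cast_succ, z_eq_linComb F hk, z_eq_linComb F (by omega)]
  rw [← Nat.cast_succ, show (n : ℤ) + 2 = ((n + 1 + 1 : ℕ) : ℤ) by push_cast; ring] at hquad
  ext1 μ
  set S : Finset Idx := μ.support ∪ {some (Sum.inl 0), some (Sum.inr 0)}
  have hP : some (Sum.inl 0) ∈ S := by simp [S]
  have hQ : some (Sum.inr 0) ∈ S := by simp [S]
  have hfin := Dcal_sum_zCoeff_sub_nab_sum_zCoeff F n hP hQ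
  have hμ : (μ.support : Set Idx) ⊆ S := Finset.coe_subset.2 Finset.subset_union_left
  have h1 := (vanishesOn_linComb_sub_sum S (zCoeff F (n + 1))).Dcal hP hQ F
  have h2 := (vanishesOn_linComb_sub_sum S (zCoeff F (n + 1 + 1))).nab hP
  have h3 := vanishesOn_linComb_sub_sum S (yxCoeff F (n + 1))
  rw [← sub_eq_zero, ← map_sub]
  refine Eq.trans (congrArg (coeff μ) ?_) (((h1.sub h2).sub h3) μ hμ)
  simp only [Dcal_eq, nab_eq, map_add, map_sub] at hquad hcorr hfin ⊢
  linear_combination hquad - hcorr + hfin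

end
end
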